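/- Let r ≥ 1 and let ι : ℤ^r → ℂ be an additive group homomorphism whose values x_j = ι(e_j) on the standard basis vectors are linearly independent over ℚ and span ℂ over ℝ. Let x = (x_1, …, x_r) ∈ ℂ^r, let V be the quotient complex vector space ℂ^r / ℂ·x, and let q : ℤ^r → V be the composite of the inclusion ℤ^r ⊂ ℂ^r with the quotient map. Then for every i with 0 ≤ i ≤ r − 2 there is an isomorphism of abelian groups H^i(ℤ^r, O(ℂ)^×) ≅ (∧^i_ℂ V) / L_i, where L_i is the subgroup of the i-th exterior power ∧^i_ℂ V generated by the elements q(v_1) ∧ ⋯ ∧ q(v_i) for v_1, …, v_i ∈ ℤ^r. -/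

import Mathlib

/-!
Group cohomology of `ℤ^r` is computed by the Koszul complex of alternating cochains
`(ℤ^r)^n → M`, whose differential is built from the operators `e_j - 1` (`gc_koszul`). This is
proved by dimension shifting along the embedding of `M` into a coinduced module, which is acyclic
for both theories.

Let `𝒪` be the entire functions. Among the `x_j` choose two, `x_a` and `x_b`, that are independent
over `ℝ`. Three analytic facts control the Koszul complex of `𝒪`:
* every entire function is an `x_a`-difference of an entire function (`guichard`);
* every `x_a`-periodic entire function is a constant plus the `x_b`-difference of an `x_a`-periodic
  one, by Fourier expansion (`periodic_difference`);
* doubly periodic entire functions are constant (`doubly_periodic_const`).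

Hence every cocycle with values in `𝒪` is cohomologous to a constant one (`cocycle_eq_const_add`).
A constant cochain is a coboundary in `𝒪` exactly when it is of the form `x ∧ k` with `k` constant
(`const_mem_kB_iff`, proved by differentiating a primitive cochain). So
`H^i(ℤ^r, 𝒪) = ⋀^i ℂ^r / x ∧ ⋀^(i-1) ℂ^r = ⋀^i V`.

Finally there is the exponential sequence `0 → ℤ → 𝒪 → 𝒪^× → 0`. For `i + 1 ≤ r - 1` the map
`H^(i+1)(ℤ^r, ℤ) → H^(i+1)(ℤ^r, 𝒪)` is injective: an integral cochain `n` of the form `x ∧ k` satisfies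
`x ∧ n = 0`, and `ℚ`-independence of the `x_j` forces `n = 0` (`int_eq_zero_of_mem_kB`). Therefore
`H^i(ℤ^r, 𝒪^×)` is `⋀^i V` modulo the image of the integral cochains, and that image is `L_i`
(`mem_closure_iff_exists_int`).
-/

open Complex

/-- The multiplicative abelian group `O(ℂ)^×` of nowhere-vanishing entire functions. -/
def EntireUnits : Type := {f : ℂ → ℂ // Differentiable ℂ f ∧ ∀ z, f z ≠ 0}

noncomputable instance : CommGroup EntireUnits where
  mul f g := ⟨fun z => f.1 z * g.1 z, f.2.1.mul g.2.1,
    fun z => mul_ne_zero (f.2.2 z) (g.2.2 z)⟩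
  one := ⟨fun _ => 1, differentiable_const 1, fun _ => one_ne_zero⟩
  inv f := ⟨fun z => (f.1 z)⁻¹, f.2.1.inv f.2.2, fun z => inv_ne_zero (f.2.2 z)⟩
  mul_assoc f g h := Subtype.ext (funext fun z => mul_assoc _ _ _)
  one_mul f := Subtype.ext (funext fun z => one_mul _)
  mul_one f := Subtype.ext (funext fun z => mul_one _)
  inv_mul_cancel f := Subtype.ext (funext fun z => inv_mul_cancel₀ (f.2.2 z))
  mul_comm f g := Subtype.ext (funext fun z => mul_comm _ _)

/-- Translation of a nowhere-vanishing entire function by `c ∈ ℂ`. -/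
def EntireUnits.translate (c : ℂ) : EntireUnits →* EntireUnits where
  toFun f := ⟨fun z => f.1 (z + c), f.2.1.comp (differentiable_id.add_const c),
    fun z => f.2.2 (z + c)⟩
  map_one' := rfl
  map_mul' f g := rfl

/-- The action of `ℤ^r` on `O(ℂ)^×` given by `(n · f)(z) = f(z + ι(n))`, packaged as a
representation over `ℤ` of the (multiplicative avatar of the) group `ℤ^r` on the additive
avatar of `O(ℂ)^×`. -/
noncomputable def entireRep (r : ℕ) (ι : (Fin r → ℤ) →+ ℂ) :
    Representation ℤ (Multiplicative (Fin r → ℤ)) (Additive EntireUnits) where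
  toFun n := (MonoidHom.toAdditive (EntireUnits.translate (ι n.toAdd))).toIntLinearMap
  map_one' := by
    apply LinearMap.ext
    intro f
    exact Subtype.ext (funext fun z => by
      show f.toMul.1 (z + ι (Multiplicative.toAdd 1)) = f.toMul.1 z
      simp)
  map_mul' m n := by
    apply LinearMap.ext
    intro f
    exact Subtype.ext (funext fun z => by
      show f.toMul.1 (z + ι (m * n).toAdd) = f.toMul.1 (z + ι m.toAdd + ι n.toAdd)
      have h : ι (m * n).toAdd = ι m.toAdd + ι n.toAdd := by rw [toAdd_mul, map_add]
      rw [h, add_assoc])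

/-- `H^i(ℤ^r, O(ℂ)^×)`, the group cohomology of `ℤ^r` with coefficients in the
nowhere-vanishing entire functions, acted on by translation through `ι`. -/
noncomputable def entireCohomology (r : ℕ) (ι : (Fin r → ℤ) →+ ℂ) (i : ℕ) :=
  groupCohomology (Rep.of (entireRep r ι)) i

/-! ### The Koszul complex of `ℤ^r` -/

section Koszul

variable {r : ℕ} {M M' : Type*} [AddCommGroup M] [AddCommGroup M']

/-- Koszul cochains of degree `n` with values in `M`: alternating `ℤ`-multilinear maps
`(ℤ^r)^n → M`, that is, homomorphisms from the `n`-th exterior power of `ℤ^r` to `M`. -/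
abbrev KC (r : ℕ) (M : Type*) [AddCommGroup M] (n : ℕ) := (Fin r → ℤ) [⋀^Fin n]→ₗ[ℤ] M

/-- The standard basis vector `e_j` of `ℤ^r`. -/
abbrev stdE {r : ℕ} (j : Fin r) : Fin r → ℤ := Pi.single j 1

/-- The Koszul differential attached to a family of endomorphisms `τ v` of `M`, additive in `v`:
`(dc)(v₀, …, vₙ) = ∑ (-1)^k τ(v_k) c(v₀, …, v̂_k, …, vₙ)`. -/
def kd (τ : (Fin r → ℤ) →ₗ[ℤ] Module.End ℤ M) {n : ℕ} : KC r M n →ₗ[ℤ] KC r M (n + 1) where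
  toFun c := AlternatingMap.alternatizeUncurryFin
    { toFun := fun v => (τ v).compAlternatingMap c
      map_add' := fun v w => by ext; simp
      map_smul' := fun a v => by ext; simp [-zsmul_eq_mul] }
  map_add' c c' := by
    rw [← AlternatingMap.alternatizeUncurryFin_add]
    congr 1
    ext; simp
  map_smul' a c := by
    rw [← AlternatingMap.alternatizeUncurryFin_smul]
    congr 1
    ext; simp

theorem kd_apply (τ : (Fin r → ℤ) →ₗ[ℤ] Module.End ℤ M) {n : ℕ} (c : KC r M n)
    (v : Fin (n + 1) → (Fin r → ℤ)) :
    kd τ c v = ∑ k : Fin (n + 1), (-1 : ℤ) ^ (k : ℕ) • τ (v k) (c (k.removeNth v)) := by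
  simp [kd, AlternatingMap.alternatizeUncurryFin_apply]

theorem kd_kd (τ : (Fin r → ℤ) →ₗ[ℤ] Module.End ℤ M)
    (hτ : ∀ v w m, τ v (τ w m) = τ w (τ v m)) {n : ℕ} (c : KC r M n) :
    kd τ (kd τ c) = 0 := by
  have := AlternatingMap.alternatizeUncurryFin_alternatizeUncurryFinLM_comp_of_symmetric
    (f := LinearMap.mk₂ ℤ (fun v w => ((τ v) ∘ₗ (τ w)).compAlternatingMap c)
      (by intros; ext; simp) (by intros; ext; simp [-zsmul_eq_mul])
      (by intros; ext; simp) (by intros; ext; simp [-zsmul_eq_mul]))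
    (by intro v w; ext u; simp [hτ v w])
  rw [← this]
  ext v
  rw [kd_apply, AlternatingMap.alternatizeUncurryFin_apply]
  refine Finset.sum_congr rfl fun k _ => ?_
  congr 1
  simp only [LinearMap.comp_apply, AlternatingMap.alternatizeUncurryFinLM_apply,
    AlternatingMap.alternatizeUncurryFin_apply, kd_apply, map_sum, map_smul]
  simp

theorem kd_comp {τ : (Fin r → ℤ) →ₗ[ℤ] Module.End ℤ M} {τ' : (Fin r → ℤ) →ₗ[ℤ] Module.End ℤ M'}
    (φ : M →ₗ[ℤ] M') (h : ∀ v m, φ (τ v m) = τ' v (φ m)) {n : ℕ} (c : KC r M n) :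
    kd τ' (φ.compAlternatingMap c) = φ.compAlternatingMap (kd τ c) := by
  ext v
  simp [kd_apply, map_sum, h]

theorem kc_ext {n : ℕ} {c c' : KC r M n}
    (h : ∀ f : Fin n → Fin r, Function.Injective f →
      c (fun k => stdE (f k)) = c' (fun k => stdE (f k))) : c = c' := by
  refine Module.Basis.ext_alternating (Pi.basisFun ℤ (Fin r)) fun f hf => ?_
  simpa using h f hf

theorem kdata_ext {F : Type*} [AddCommGroup F] (f g : (Fin r → ℤ) →ₗ[ℤ] F)
    (h : ∀ j, f (stdE j) = g (stdE j)) : f = g :=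
  (Pi.basisFun ℤ (Fin r)).ext fun j => by simpa using h j

/-- Exterior powers of `ℤ^r` are free, so cochains lift along surjections of coefficients. -/
theorem kc_lift {n : ℕ} (f : M →ₗ[ℤ] M') (hf : Function.Surjective f) (c : KC r M' n) :
    ∃ b : KC r M n, f.compAlternatingMap b = c := by
  obtain ⟨g, hg⟩ := Module.projective_lifting_property f
    (exteriorPower.alternatingMapLinearEquiv c) hf
  refine ⟨exteriorPower.alternatingMapLinearEquiv.symm g, ?_⟩
  ext v
  have := LinearMap.congr_fun hg (exteriorPower.ιMulti ℤ n v)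
  simpa using this

/-- A cochain with values in the image of an injection of coefficients lifts along it. -/
theorem kc_lift_sub {n : ℕ} (f : M →ₗ[ℤ] M') (hf : Function.Injective f) (c : KC r M' n)
    (hc : ∀ v, ∃ m, f m = c v) : ∃ b : KC r M n, f.compAlternatingMap b = c := by
  refine ⟨(LinearEquiv.ofInjective f hf).symm.toLinearMap.compAlternatingMap
    (c.codRestrict (LinearMap.range f) hc), ?_⟩
  ext v
  simp only [LinearMap.compAlternatingMap_apply]
  have := congrArg Subtype.val ((LinearEquiv.ofInjective f hf).apply_symm_apply
    ((c.codRestrict (LinearMap.range f) hc) v))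
  exact this

/-- `c` vanishes as soon as one of its arguments is a basis vector indexed by `A`. -/
def KOff (A : Set (Fin r)) {n : ℕ} (c : KC r M n) : Prop :=
  ∀ v : Fin n → (Fin r → ℤ), ∀ k, ∀ l ∈ A, v k = stdE l → c v = 0

theorem KOff.sub {A : Set (Fin r)} {n : ℕ} {c c' : KC r M n} (h : KOff A c) (h' : KOff A c') :
    KOff A (c - c') := fun v k l hl hv => by
  rw [AlternatingMap.sub_apply, h v k l hl hv, h' v k l hl hv, sub_zero]

/-- The projection of `ℤ^r` killing the basis vectors indexed by `A` and fixing the others. -/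
noncomputable def kproj (A : Set (Fin r)) : (Fin r → ℤ) →ₗ[ℤ] (Fin r → ℤ) := by
  classical
  exact (Pi.basisFun ℤ (Fin r)).constr ℤ fun j => if j ∈ A then 0 else stdE j

theorem kproj_mem (A : Set (Fin r)) {j : Fin r} (h : j ∈ A) : kproj A (stdE j) = 0 := by
  classical
  have := (Pi.basisFun ℤ (Fin r)).constr_basis ℤ (fun j => if j ∈ A then 0 else stdE j) j
  simp only [Pi.basisFun_apply] at this
  rw [kproj, this, if_pos h]

theorem kproj_notMem (A : Set (Fin r)) {j : Fin r} (h : j ∉ A) :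
    kproj A (stdE j) = stdE j := by
  classical
  have := (Pi.basisFun ℤ (Fin r)).constr_basis ℤ (fun j => if j ∈ A then 0 else stdE j) j
  simp only [Pi.basisFun_apply] at this
  rw [kproj, this, if_neg h]

theorem kc_comp_kproj {A : Set (Fin r)} {n : ℕ} {c : KC r M n} (h : KOff A c) :
    c.compLinearMap (kproj A) = c := by
  refine kc_ext fun f _ => ?_
  by_cases hf : ∃ k, f k ∈ A
  · obtain ⟨k, hk⟩ := hf
    rw [h _ k _ hk rfl, AlternatingMap.compLinearMap_apply]
    exact c.map_coord_zero k (kproj_mem A hk)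
  · push Not at hf
    rw [AlternatingMap.compLinearMap_apply]
    congr 1
    ext k : 1
    exact kproj_notMem A (hf k)

theorem kOff_comp_kproj (A : Set (Fin r)) {n : ℕ} (c : KC r M n) :
    KOff A (c.compLinearMap (kproj A)) := fun v k l hl hv => by
  rw [AlternatingMap.compLinearMap_apply]
  exact c.map_coord_zero k (by rw [hv]; exact kproj_mem A hl)

theorem kc_eq_zero_of_off_univ {n : ℕ} {c : KC r M (n + 1)} (h : KOff Set.univ c) : c = 0 :=
  kc_ext fun f _ => h _ 0 _ (Set.mem_univ (f 0)) rfl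

/-- If `b` vanishes in the directions `A` and one argument is a basis vector from `A`, then only one
term of the Koszul differential survives. -/
theorem kd_single {A : Set (Fin r)} (τ : (Fin r → ℤ) →ₗ[ℤ] Module.End ℤ M) {n : ℕ}
    {b : KC r M n} (hb : KOff A b) {v : Fin (n + 1) → (Fin r → ℤ)} {k : Fin (n + 1)} {l : Fin r}
    (hl : l ∈ A) (hv : v k = stdE l) :
    kd τ b v = (-1 : ℤ) ^ (k : ℕ) • τ (stdE l) (b (k.removeNth v)) := by
  rw [kd_apply, Finset.sum_eq_single k, hv]
  · intro j _ hjk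
    obtain ⟨i, hi⟩ := Fin.exists_succAbove_eq hjk.symm
    rw [hb (j.removeNth v) i l hl (by rw [Fin.removeNth_apply, hi, hv])]
    simp
  · simp

theorem kc_mem_sub {N : Submodule ℤ M} (τ : (Fin r → ℤ) →ₗ[ℤ] Module.End ℤ M)
    (hN : ∀ v, ∀ m ∈ N, τ v m ∈ N) {n : ℕ} {b : KC r M n} (hb : ∀ v, b v ∈ N) (v) :
    kd τ b v ∈ N := by
  rw [kd_apply]
  exact N.sum_mem fun k _ => N.smul_mem _ (hN _ _ (hb _))

/-- Let `N` be killed by `τ(e_l)` for `l ∈ A`, and let `τ(e_a)` map `N` onto `N`. A cochain with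
values in `N` that vanishes in the directions `A` can be changed by a coboundary so that it also
vanishes in direction `a`: the correction is a `τ(e_a)`-preimage of the contraction with `e_a`. -/
theorem kc_normalize (τ : (Fin r → ℤ) →ₗ[ℤ] Module.End ℤ M) (N : Submodule ℤ M)
    (A : Set (Fin r)) (hA : ∀ l ∈ A, ∀ m ∈ N, τ (stdE l) m = 0) (a : Fin r)
    (hNa : ∀ m ∈ N, τ (stdE a) m ∈ N)
    (ha : ∀ m ∈ N, ∃ m' ∈ N, τ (stdE a) m' = m) {n : ℕ} (c : KC r M (n + 1))
    (hcN : ∀ v, c v ∈ N) (hcA : KOff A c) :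
    ∃ b : KC r M n, (∀ v, b v ∈ N) ∧ KOff (insert a A) (c - kd τ b) := by
  let T : N →ₗ[ℤ] N := (τ (stdE a)).restrict hNa
  have hT : Function.Surjective T := by
    rintro ⟨m, hm⟩
    obtain ⟨m', hm', h⟩ := ha m hm
    exact ⟨⟨m', hm'⟩, Subtype.ext h⟩
  obtain ⟨b₀, hb₀⟩ := kc_lift T hT ((c.curryLeft (stdE a)).codRestrict N fun v => hcN _)
  have hb₀' : ∀ v, τ (stdE a) (b₀ v : M) = c (Matrix.vecCons (stdE a) v) := fun v =>
    congrArg Subtype.val (DFunLike.congr_fun hb₀ v)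
  have hoff : KOff (insert a A) (c.curryLeft (stdE a)) := by
    rintro v k l (rfl | hl) hv
    · rw [AlternatingMap.curryLeft_apply_apply]
      exact c.map_eq_zero_of_eq _ (i := 0) (j := k.succ) (by simp [hv]) (Fin.succ_ne_zero k).symm
    · rw [AlternatingMap.curryLeft_apply_apply]
      exact hcA _ k.succ l hl (by simp [hv])
  let b : KC r M n := (N.subtype.compAlternatingMap b₀).compLinearMap (kproj (insert a A))
  have hbN : ∀ v, b v ∈ N := fun v => (b₀ _).2
  have hboff : KOff (insert a A) b := kOff_comp_kproj _ _
  have hb : ∀ v, τ (stdE a) (b v) = c (Matrix.vecCons (stdE a) v) := fun v => by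
    have := DFunLike.congr_fun (kc_comp_kproj hoff) v
    rw [AlternatingMap.compLinearMap_apply, AlternatingMap.curryLeft_apply_apply,
      AlternatingMap.curryLeft_apply_apply] at this
    rw [← this]
    exact hb₀' _
  refine ⟨b, hbN, ?_⟩
  rintro v k l hl' hv
  rw [AlternatingMap.sub_apply, kd_single τ hboff hl' hv, sub_eq_zero]
  rcases hl' with (rfl | hl)
  · rw [hb]
    have := c.map_insertNth k (stdE l) (k.removeNth v)
    rw [← this, ← hv, Fin.insertNth_self_removeNth]
  · rw [hcA v k l hl hv, hA l hl _ (hbN _), smul_zero]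

/-- A cocycle that vanishes in direction `a` has values in the kernel of `τ a`. -/
theorem kc_ker_of_off (τ : (Fin r → ℤ) →ₗ[ℤ] Module.End ℤ M) {A : Set (Fin r)} {a : Fin r}
    (ha : a ∈ A) {n : ℕ} {c : KC r M n} (hc : kd τ c = 0) (hoff : KOff A c) (v) :
    τ (stdE a) (c v) = 0 := by
  have := kd_single τ hoff (v := Matrix.vecCons (stdE a) v) (k := 0) ha rfl
  rw [hc] at this
  simpa using this.symm

end Koszul

/-! ### Koszul cohomology and dimension shifting -/

section KoszulH

variable {r : ℕ} {M J N : Type*} [AddCommGroup M] [AddCommGroup J] [AddCommGroup N]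

/-- Two surjections from the same group with the same kernel have isomorphic targets. -/
theorem addEquiv_of_surjective {P X Y : Type*} [AddCommGroup P] [AddCommGroup X] [AddCommGroup Y]
    (α : P →+ X) (β : P →+ Y) (hα : Function.Surjective α) (hβ : Function.Surjective β)
    (h : ∀ p, α p = 0 ↔ β p = 0) : Nonempty (X ≃+ Y) := by
  have hk : α.ker = β.ker := by ext p; simpa [AddMonoidHom.mem_ker] using h p
  exact ⟨(QuotientAddGroup.quotientKerEquivOfSurjective α hα).symm.trans
    ((QuotientAddGroup.quotientAddEquivOfEq hk).trans
      (QuotientAddGroup.quotientKerEquivOfSurjective β hβ))⟩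

/-- Koszul coboundaries; there are none in degree `0`. -/
def kB (τ : (Fin r → ℤ) →ₗ[ℤ] Module.End ℤ M) : (n : ℕ) → Submodule ℤ (KC r M n)
  | 0 => ⊥
  | _ + 1 => LinearMap.range (kd τ)

/-- Koszul cocycles. -/
def kZ (τ : (Fin r → ℤ) →ₗ[ℤ] Module.End ℤ M) (n : ℕ) : Submodule ℤ (KC r M n) :=
  LinearMap.ker (kd τ)

/-- Koszul cohomology: cocycles modulo coboundaries. It is meaningful when the `τ v` commute, in
which case coboundaries are cocycles. -/
abbrev kH (τ : (Fin r → ℤ) →ₗ[ℤ] Module.End ℤ M) (n : ℕ) :=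
  kZ τ n ⧸ (kB τ n).submoduleOf (kZ τ n)

/-- The cochains with values in `N` that lift along `g : J → N` to cocycles with values in `J`. -/
def kBlift (τJ : (Fin r → ℤ) →ₗ[ℤ] Module.End ℤ J) (g : J →ₗ[ℤ] N) (n : ℕ) :
    Submodule ℤ (KC r N n) :=
  (kZ τJ n).map (g.compAlternatingMapₗ ℤ : KC r J n →ₗ[ℤ] KC r N n)

theorem mem_kBlift {τJ : (Fin r → ℤ) →ₗ[ℤ] Module.End ℤ J} {g : J →ₗ[ℤ] N} {n : ℕ}
    {c : KC r N n} : c ∈ kBlift τJ g n ↔ ∃ b, kd τJ b = 0 ∧ g.compAlternatingMap b = c :=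
  Iff.rfl

/-- Dimension shifting for Koszul cohomology: for a short exact sequence `M → J → N` with `J`
acyclic in positive degrees, the cohomology of `M` in degree `n + 1` consists of the cocycles of `N`
in degree `n` modulo those that lift to cocycles of `J`. For `n > 0` the latter are the
coboundaries, by `kBlift_succ`. -/
theorem kH_shift (τM : (Fin r → ℤ) →ₗ[ℤ] Module.End ℤ M)
    (τJ : (Fin r → ℤ) →ₗ[ℤ] Module.End ℤ J) (τN : (Fin r → ℤ) →ₗ[ℤ] Module.End ℤ N)
    (hJ : ∀ v w m, τJ v (τJ w m) = τJ w (τJ v m))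
    (f : M →ₗ[ℤ] J) (g : J →ₗ[ℤ] N) (hf : Function.Injective f) (hg : Function.Surjective g)
    (hfg : ∀ m, g m = 0 ↔ ∃ m', f m' = m)
    (hfτ : ∀ v m, f (τM v m) = τJ v (f m)) (hgτ : ∀ v m, g (τJ v m) = τN v (g m))
    (hac : ∀ (n : ℕ) (c : KC r J (n + 1)), kd τJ c = 0 → ∃ b, kd τJ b = c) (n : ℕ) :
    Nonempty (kH τM (n + 1) ≃+ kZ τN n ⧸ (kBlift τJ g n).submoduleOf (kZ τN n)) := by
  have hfinj : ∀ {n} {c c' : KC r M n}, f.compAlternatingMap c = f.compAlternatingMap c' → c = c' :=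
    fun {n c c'} h => AlternatingMap.ext fun v => hf (DFunLike.congr_fun h v)
  have hgf : ∀ {n} (c : KC r M n), g.compAlternatingMap (f.compAlternatingMap c) = 0 :=
    fun c => AlternatingMap.ext fun v => (hfg _).2 ⟨_, rfl⟩
  have hgk : ∀ {n} (c : KC r J n), g.compAlternatingMap c = 0 → ∃ b, f.compAlternatingMap b = c :=
    fun c hc => kc_lift_sub f hf c fun v => (hfg _).1 (DFunLike.congr_fun hc v)
  let P : Submodule ℤ (KC r J n × KC r M (n + 1)) :=
    LinearMap.eqLocus ((kd τJ).comp (LinearMap.fst ℤ _ _))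
      ((f.compAlternatingMapₗ ℤ : KC r M (n + 1) →ₗ[ℤ] KC r J (n + 1)).comp (LinearMap.snd ℤ _ _))
  have hP : ∀ p : P, kd τJ p.1.1 = f.compAlternatingMap p.1.2 := fun p => p.2
  have h1 : ∀ p : P, p.1.2 ∈ kZ τM (n + 1) := fun p => by
    apply hfinj
    rw [← kd_comp f hfτ, ← hP, kd_kd τJ hJ]
    ext; simp
  have h2 : ∀ p : P, g.compAlternatingMap p.1.1 ∈ kZ τN n := fun p => by
    show kd τN _ = 0
    rw [kd_comp g hgτ, hP, hgf]
  let α₀ : P →ₗ[ℤ] kZ τM (n + 1) := LinearMap.codRestrict _ ((LinearMap.snd ℤ _ _).comp P.subtype) h1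
  let β₀ : P →ₗ[ℤ] kZ τN n := LinearMap.codRestrict _
    ((g.compAlternatingMapₗ ℤ : KC r J n →ₗ[ℤ] KC r N n).comp
      ((LinearMap.fst ℤ _ _).comp P.subtype)) h2
  refine addEquiv_of_surjective ((Submodule.mkQ _).comp α₀).toAddMonoidHom
    ((Submodule.mkQ _).comp β₀).toAddMonoidHom ?_ ?_ ?_
  · refine (Submodule.mkQ_surjective _).comp ?_
    rintro ⟨c, hc⟩
    obtain ⟨b, hb⟩ := hac n (f.compAlternatingMap c) (by
      rw [kd_comp f hfτ, show kd τM c = 0 from hc]; ext; simp)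
    exact ⟨⟨(b, c), hb⟩, rfl⟩
  · refine (Submodule.mkQ_surjective _).comp ?_
    rintro ⟨c, hc⟩
    obtain ⟨b, hb⟩ := kc_lift g hg c
    obtain ⟨m, hm⟩ := hgk (kd τJ b) (by rw [← kd_comp g hgτ, hb]; exact hc)
    exact ⟨⟨(b, m), hm.symm⟩, Subtype.ext hb⟩
  · intro p
    show Submodule.Quotient.mk (α₀ p) = 0 ↔ Submodule.Quotient.mk (β₀ p) = 0
    rw [Submodule.Quotient.mk_eq_zero, Submodule.Quotient.mk_eq_zero]
    show p.1.2 ∈ LinearMap.range (kd τM) ↔ g.compAlternatingMap p.1.1 ∈ kBlift τJ g n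
    rw [mem_kBlift]
    constructor
    · rintro ⟨m, hm⟩
      refine ⟨p.1.1 - f.compAlternatingMap m, ?_, ?_⟩
      · rw [map_sub, hP, kd_comp f hfτ, hm, sub_self]
      · have := hgf m
        ext v
        have := DFunLike.congr_fun this v
        simp at this
        simp [this]
    · rintro ⟨b, hb, hgb⟩
      obtain ⟨m, hm⟩ := hgk (p.1.1 - b) (by
        ext v
        have := DFunLike.congr_fun hgb v
        simp at this
        simp [this])
      refine ⟨m, hfinj ?_⟩
      rw [← kd_comp f hfτ, hm, map_sub, hb, sub_zero, hP]

theorem kBlift_succ (τJ : (Fin r → ℤ) →ₗ[ℤ] Module.End ℤ J)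
    (τN : (Fin r → ℤ) →ₗ[ℤ] Module.End ℤ N)
    (hJ : ∀ v w m, τJ v (τJ w m) = τJ w (τJ v m))
    (g : J →ₗ[ℤ] N) (hg : Function.Surjective g)
    (hgτ : ∀ v m, g (τJ v m) = τN v (g m))
    (hac : ∀ (n : ℕ) (c : KC r J (n + 1)), kd τJ c = 0 → ∃ b, kd τJ b = c) (n : ℕ) :
    kBlift τJ g (n + 1) = kB τN (n + 1) := by
  ext c
  rw [mem_kBlift]
  constructor
  · rintro ⟨b, hb, rfl⟩
    obtain ⟨b', rfl⟩ := hac n b hb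
    exact ⟨g.compAlternatingMap b', kd_comp g hgτ b'⟩
  · rintro ⟨h, rfl⟩
    obtain ⟨h', rfl⟩ := kc_lift g hg h
    exact ⟨kd τJ h', kd_kd τJ hJ h', (kd_comp g hgτ h').symm⟩

end KoszulH

/-! ### Representations of `ℤ^r` and coinduced modules -/

section Comparison

variable {r : ℕ} {X Y : Type*} [AddCommGroup X] [AddCommGroup Y]

/-- The Koszul data of a representation of `ℤ^r`: `e_j ↦ ρ(e_j) - 1`. -/
noncomputable def kτ (ρ : Representation ℤ (Multiplicative (Fin r → ℤ)) X) :
    (Fin r → ℤ) →ₗ[ℤ] Module.End ℤ X :=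
  (Pi.basisFun ℤ (Fin r)).constr ℤ fun j => ρ (Multiplicative.ofAdd (stdE j)) - 1

theorem kτ_stdE (ρ : Representation ℤ (Multiplicative (Fin r → ℤ)) X) (j : Fin r) (m : X) :
    kτ ρ (stdE j) m = ρ (Multiplicative.ofAdd (stdE j)) m - m := by
  have := (Pi.basisFun ℤ (Fin r)).constr_basis ℤ
    (fun j => ρ (Multiplicative.ofAdd (stdE j)) - 1) j
  simp only [Pi.basisFun_apply] at this
  rw [kτ, this]
  rfl

theorem comm_of_stdE (τ : (Fin r → ℤ) →ₗ[ℤ] Module.End ℤ X)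
    (h : ∀ i j m, τ (stdE i) (τ (stdE j) m) = τ (stdE j) (τ (stdE i) m)) (v w : Fin r → ℤ) (m : X) :
    τ v (τ w m) = τ w (τ v m) := by
  have h1 : ∀ i w m, τ (stdE i) (τ w m) = τ w (τ (stdE i) m) := fun i w m =>
    LinearMap.congr_fun (kdata_ext ((τ (stdE i)).comp (LinearMap.applyₗ m ∘ₗ τ))
      (LinearMap.applyₗ (τ (stdE i) m) ∘ₗ τ) (fun j => h i j m)) w
  exact LinearMap.congr_fun (kdata_ext (LinearMap.applyₗ (τ w m) ∘ₗ τ)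
      ((τ w).comp (LinearMap.applyₗ m ∘ₗ τ)) (fun j => h1 j w m)) v

theorem intertwine_of_stdE (τ : (Fin r → ℤ) →ₗ[ℤ] Module.End ℤ X)
    (τ' : (Fin r → ℤ) →ₗ[ℤ] Module.End ℤ Y) (φ : X →ₗ[ℤ] Y)
    (h : ∀ j m, φ (τ (stdE j) m) = τ' (stdE j) (φ m)) (v : Fin r → ℤ) (m : X) :
    φ (τ v m) = τ' v (φ m) :=
  LinearMap.congr_fun (kdata_ext (φ.comp (LinearMap.applyₗ m ∘ₗ τ))
      (LinearMap.applyₗ (φ m) ∘ₗ τ') (fun j => h j m)) v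

theorem kτ_comm (ρ : Representation ℤ (Multiplicative (Fin r → ℤ)) X) (v w : Fin r → ℤ) (m : X) :
    kτ ρ v (kτ ρ w m) = kτ ρ w (kτ ρ v m) := by
  refine comm_of_stdE _ (fun i j m => ?_) v w m
  have : ρ (Multiplicative.ofAdd (stdE i)) (ρ (Multiplicative.ofAdd (stdE j)) m) =
      ρ (Multiplicative.ofAdd (stdE j)) (ρ (Multiplicative.ofAdd (stdE i)) m) := by
    rw [← Module.End.mul_apply, ← Module.End.mul_apply, ← map_mul ρ, ← map_mul ρ, mul_comm]
  simp only [kτ_stdE, map_sub, this]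
  abel

theorem kτ_intertwine (ρ : Representation ℤ (Multiplicative (Fin r → ℤ)) X)
    (ρ' : Representation ℤ (Multiplicative (Fin r → ℤ)) Y) (φ : X →ₗ[ℤ] Y)
    (h : ∀ g m, φ (ρ g m) = ρ' g (φ m)) (v : Fin r → ℤ) (m : X) :
    φ (kτ ρ v m) = kτ ρ' v (φ m) :=
  intertwine_of_stdE _ _ φ (fun j m => by rw [kτ_stdE, kτ_stdE, map_sub, h]) v m

/-- An element is invariant under `ℤ^r` as soon as it is fixed by the generators `e_j`. -/
theorem kτ_invariant (ρ : Representation ℤ (Multiplicative (Fin r → ℤ)) X) (m : X) :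
    (∀ g, ρ g m = m) ↔ ∀ v, kτ ρ v m = 0 := by
  constructor
  · intro h v
    exact LinearMap.congr_fun (kdata_ext (LinearMap.applyₗ m ∘ₗ kτ ρ) 0
      (fun j => by
        show kτ ρ (stdE j) m = 0
        rw [kτ_stdE, h, sub_self])) v
  · intro h
    let S : AddSubgroup (Fin r → ℤ) :=
      { carrier := {v | ρ (Multiplicative.ofAdd v) m = m}
        zero_mem' := by simp
        add_mem' := by
          intro a b ha hb
          simp only [Set.mem_ofPred_eq] at ha hb ⊢
          rw [ofAdd_add, map_mul, Module.End.mul_apply, hb, ha]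
        neg_mem' := by
          intro a ha
          simp only [Set.mem_ofPred_eq] at ha ⊢
          have : ρ (Multiplicative.ofAdd (-a)) (ρ (Multiplicative.ofAdd a) m) = m := by
            rw [← Module.End.mul_apply, ← map_mul, ← ofAdd_add]; simp
          rwa [ha] at this }
    have hS : ∀ j, stdE j ∈ S := fun j => by
      have := h (stdE j)
      rw [kτ_stdE, sub_eq_zero] at this
      exact this
    intro g
    have hg : g.toAdd ∈ S := by
      have : g.toAdd = ∑ j, g.toAdd j • stdE j := by
        ext i
        simp [Finset.sum_apply, Pi.single_apply]
      rw [this]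
      exact S.sum_mem fun j _ => S.zsmul_mem (hS j) _
    exact hg

/-- Functions on `ℤ^r` with values in `X`: the module coinduced from the trivial subgroup. -/
def CoindFun (r : ℕ) (X : Type*) := Multiplicative (Fin r → ℤ) → X

instance : AddCommGroup (CoindFun r X) := inferInstanceAs (AddCommGroup (_ → X))

/-- The action `(g · f)(h) = f (h g)` of `ℤ^r` on `CoindFun r X` by translation. -/
def coindRep (r : ℕ) (X : Type*) [AddCommGroup X] :
    Representation ℤ (Multiplicative (Fin r → ℤ)) (CoindFun r X) where
  toFun g := AddMonoidHom.toIntLinearMap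
    { toFun := fun f h => f (h * g)
      map_zero' := rfl
      map_add' := fun _ _ => rfl }
  map_one' := by
    refine LinearMap.ext fun f => funext fun h => ?_
    show f (h * 1) = f h
    rw [mul_one]
  map_mul' a b := by
    refine LinearMap.ext fun f => funext fun h => ?_
    show f (h * (a * b)) = f (h * a * b)
    rw [mul_assoc]

theorem exists_int_primitive (g : ℤ → X) : ∃ f : ℤ → X, ∀ n, f (n + 1) - f n = g n := by
  refine ⟨fun n => ∑ k ∈ Finset.Ico 0 n, g k - ∑ k ∈ Finset.Ico n 0, g k, fun n => ?_⟩
  rcases lt_or_ge n 0 with h | h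
  · have e1 : Finset.Ico n 0 = insert n (Finset.Ico (n + 1) 0) := by
      ext k; simp only [Finset.mem_Ico, Finset.mem_insert]; omega
    have e2 : Finset.Ico 0 n = ∅ := by ext k; simp only [Finset.mem_Ico]; simp; omega
    have e3 : Finset.Ico 0 (n + 1) = ∅ := by ext k; simp only [Finset.mem_Ico]; simp; omega
    beta_reduce
    rw [e1, e2, e3, Finset.sum_insert (by simp)]
    simp
  · have e1 : Finset.Ico 0 (n + 1) = insert n (Finset.Ico 0 n) := by
      ext k; simp only [Finset.mem_Ico, Finset.mem_insert]; omega
    have e2 : Finset.Ico n 0 = ∅ := by ext k; simp only [Finset.mem_Ico]; simp; omega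
    have e3 : Finset.Ico (n + 1) 0 = ∅ := by ext k; simp only [Finset.mem_Ico]; simp; omega
    beta_reduce
    rw [e1, e2, e3, Finset.sum_insert (by simp)]
    simp

theorem coind_apply (j : Fin r) (f : CoindFun r X) (h : Fin r → ℤ) :
    kτ (coindRep r X) (stdE j) f (Multiplicative.ofAdd h) =
      f (Multiplicative.ofAdd (h + stdE j)) - f (Multiplicative.ofAdd h) := by
  rw [kτ_stdE]; rfl

/-- Summation in the variable `h_a` solves the difference equation in direction `a` without
losing invariance in the directions `s`. -/
theorem coind_surj (s : Finset (Fin r)) (a : Fin r) (ha : a ∉ s) (g : CoindFun r X)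
    (hg : ∀ l ∈ s, kτ (coindRep r X) (stdE l) g = 0) :
    ∃ f : CoindFun r X, (∀ l ∈ s, kτ (coindRep r X) (stdE l) f = 0) ∧
      kτ (coindRep r X) (stdE a) f = g := by
  choose S hS using fun g : ℤ → X => exists_int_primitive g
  have hg' : ∀ l ∈ s, ∀ h : Fin r → ℤ,
      g (Multiplicative.ofAdd (h + stdE l)) = g (Multiplicative.ofAdd h) := fun l hl h => by
    have := congrFun (hg l hl) (Multiplicative.ofAdd h)
    rw [coind_apply] at this
    exact sub_eq_zero.1 this
  let F : CoindFun r X := fun h =>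
    S (fun k => g (Multiplicative.ofAdd (Function.update h.toAdd a k))) (h.toAdd a)
  have hF : ∀ h : Fin r → ℤ, F (Multiplicative.ofAdd h) =
    S (fun k => g (Multiplicative.ofAdd (Function.update h a k))) (h a) := fun h => rfl
  refine ⟨F, fun l hl => ?_, ?_⟩
  · refine funext fun h => ?_
    induction h using Multiplicative.rec with | ofAdd h => ?_
    have hla : l ≠ a := fun e => ha (e ▸ hl)
    rw [coind_apply, hF, hF]
    have e1 : ∀ k, Function.update (h + stdE l) a k = Function.update h a k + stdE l := fun k => by
      ext i
      by_cases hi : i = a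
      · subst hi; simp [hla.symm]
      · simp [Function.update_of_ne hi]
    simp only [e1, hg' l hl]
    simp [hla.symm]
    rfl
  · refine funext fun h => ?_
    induction h using Multiplicative.rec with | ofAdd h => ?_
    rw [coind_apply, hF, hF]
    have e1 : ∀ k, Function.update (h + stdE a) a k = Function.update h a k := fun k => by
      ext i
      by_cases hi : i = a
      · subst hi; simp
      · simp [hi]
    simp only [e1]
    have : (h + stdE a) a = h a + 1 := by simp
    rw [this, hS]
    simp

/-- Coinduced modules have no Koszul cohomology in positive degrees: a cocycle is normalized in one
direction after another until it vanishes. -/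
theorem coind_acyclic (n : ℕ) (c : KC r (CoindFun r X) (n + 1))
    (hc : kd (kτ (coindRep r X)) c = 0) : ∃ b, kd (kτ (coindRep r X)) b = c := by
  have key : ∀ s : Finset (Fin r), ∃ b, KOff (s : Set (Fin r)) (c - kd (kτ (coindRep r X)) b) := by
    intro s
    induction s using Finset.induction_on with
    | empty => exact ⟨0, fun v k l hl => by simp at hl⟩
    | insert a s ha ih =>
      obtain ⟨b, hb⟩ := ih
      let N : Submodule ℤ (CoindFun r X) :=
        ⨅ l ∈ s, LinearMap.ker (kτ (coindRep r X) (stdE l))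
      have hN : ∀ m, m ∈ N ↔ ∀ l ∈ s, kτ (coindRep r X) (stdE l) m = 0 := fun m => by
        simp [N, Submodule.mem_iInf]
      have hcyc : kd (kτ (coindRep r X)) (c - kd (kτ (coindRep r X)) b) = 0 := by
        rw [map_sub, hc, kd_kd _ (kτ_comm _), sub_zero]
      obtain ⟨b', -, hb'⟩ := kc_normalize (kτ (coindRep r X)) N s
        (fun l hl m hm => (hN m).1 hm l hl) a
        (fun m hm => (hN _).2 fun l hl => by rw [kτ_comm, (hN m).1 hm l hl, map_zero])
        (fun m hm => by
          obtain ⟨f, hf, hf'⟩ := coind_surj s a ha m ((hN m).1 hm)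
          exact ⟨f, (hN f).2 hf, hf'⟩)
        (c - kd (kτ (coindRep r X)) b)
        (fun v => (hN _).2 fun l hl => kc_ker_of_off _ (A := (s : Set (Fin r))) hl hcyc hb v) hb
      exact ⟨b + b', by rw [map_add, ← sub_sub, Finset.coe_insert]; exact hb'⟩
  obtain ⟨b, hb⟩ := key Finset.univ
  rw [Finset.coe_univ] at hb
  exact ⟨b, (sub_eq_zero.1 (kc_eq_zero_of_off_univ hb)).symm⟩

end Comparison

/-! ### Group cohomology of `ℤ^r` is Koszul cohomology -/

section Comparison2

open CategoryTheory

variable {r : ℕ} {X Y M J N : Type} [AddCommGroup X] [AddCommGroup Y]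
  [AddCommGroup M] [AddCommGroup J] [AddCommGroup N]

/-- Coinduced modules have no group cohomology in positive degrees, by Shapiro's lemma for the
trivial subgroup. -/
theorem gc_coind_isZero (n : ℕ) :
    Limits.IsZero (groupCohomology (Rep.of (coindRep r X)) (n + 1)) := by
  let S : Subgroup (Multiplicative (Fin r → ℤ)) := ⊥
  let A : Rep ℤ S := Rep.trivial ℤ S X
  let e₀ : CoindFun r X ≃+ Representation.coindV S.subtype A.ρ :=
    { toFun := fun f => ⟨f, fun g h => by
        have : g = 1 := Subsingleton.elim _ _
        subst this
        simp⟩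
      invFun := fun f => f.1
      left_inv := fun f => rfl
      right_inv := fun f => rfl
      map_add' := fun f g => rfl }
  let e : (coindRep r X).Equiv (Representation.coind S.subtype A.ρ) :=
    Representation.Equiv.mk e₀.toIntLinearEquiv (fun g => by
      refine LinearMap.ext fun f => ?_
      rfl)
  have h1 : Limits.IsZero (groupCohomology (Rep.coind S.subtype A) (n + 1)) :=
    (isZero_groupCohomology_succ_of_subsingleton A n).of_iso (groupCohomology.coindIso A (n + 1))
  exact h1.of_iso ((groupCohomology.functor ℤ _ (n + 1)).mapIso (Rep.mkIso e))

theorem gc_shortExact {k G M J N : Type} [CommRing k] [Group G] [AddCommGroup M] [AddCommGroup J]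
    [AddCommGroup N] [Module k M] [Module k J] [Module k N]
    (ρM : Representation k G M) (ρJ : Representation k G J) (ρN : Representation k G N)
    (f : ρM.IntertwiningMap ρJ) (g : ρJ.IntertwiningMap ρN)
    (hf : Function.Injective f) (hg : Function.Surjective g)
    (hfg : ∀ m, g m = 0 ↔ ∃ m', f m' = m) :
    ∃ h : Rep.ofHom f ≫ Rep.ofHom g = 0,
      (ShortComplex.mk (Rep.ofHom f) (Rep.ofHom g) h).ShortExact := by
  have h : Rep.ofHom f ≫ Rep.ofHom g = 0 := by
    ext m
    exact (hfg _).2 ⟨_, rfl⟩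
  refine ⟨h, ?_⟩
  refine { exact := ?_, mono_f := (Rep.mono_iff_injective _).2 hf,
           epi_g := (Rep.epi_iff_surjective _).2 hg }
  refine (ShortComplex.exact_map_iff_of_faithful _ (forget₂ (Rep k G) (ModuleCat k))).1 ?_
  rw [ShortComplex.moduleCat_exact_iff]
  intro m hm
  exact (hfg m).1 hm

/-- Degree-`0` Koszul cocycles are the invariants. -/
noncomputable def invariantsEquiv (ρ : Representation ℤ (Multiplicative (Fin r → ℤ)) X) :
    ρ.invariants ≃+ kZ (kτ ρ) 0 where
  toFun p := ⟨AlternatingMap.constOfIsEmpty ℤ (Fin r → ℤ) (Fin 0) p.1, by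
    show kd _ _ = 0
    ext v
    rw [kd_apply]
    simp [(kτ_invariant ρ p.1).1 p.2]⟩
  invFun c := ⟨c.1 0, (kτ_invariant ρ _).2 fun v => by
    have := DFunLike.congr_fun (show kd _ c.1 = 0 from c.2) (fun _ => v)
    rw [kd_apply] at this
    simp at this
    convert this⟩
  left_inv p := rfl
  right_inv c := Subtype.ext (AlternatingMap.ext fun v => congrArg c.1 (Subsingleton.elim _ _))
  map_add' a b := by ext; rfl

theorem invariantsEquiv_apply (ρ : Representation ℤ (Multiplicative (Fin r → ℤ)) X)
    (p : ρ.invariants) (v) : (invariantsEquiv ρ p).1 v = p.1 := rfl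

theorem gc_zero (ρ : Representation ℤ (Multiplicative (Fin r → ℤ)) X) :
    Nonempty (groupCohomology (Rep.of ρ) 0 ≃+ kH (kτ ρ) 0) := by
  have e1 : groupCohomology (Rep.of ρ) 0 ≃+ ρ.invariants :=
    (groupCohomology.H0Iso (Rep.of ρ)).toLinearEquiv.toAddEquiv
  refine (addEquiv_of_surjective (AddMonoidHom.id ρ.invariants)
    ((Submodule.mkQ ((kB (kτ ρ) 0).submoduleOf (kZ (kτ ρ) 0))).toAddMonoidHom.comp
      (invariantsEquiv ρ).toAddMonoidHom)
    Function.surjective_id ((Submodule.mkQ_surjective _).comp (invariantsEquiv ρ).surjective)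
    fun p => ?_).map fun e => e1.trans e
  show p = 0 ↔ Submodule.Quotient.mk (invariantsEquiv ρ p) = 0
  rw [Submodule.Quotient.mk_eq_zero]
  show p = 0 ↔ (invariantsEquiv ρ p).1 ∈ (⊥ : Submodule ℤ _)
  rw [Submodule.mem_bot, ZeroMemClass.coe_eq_zero, map_eq_zero_iff _ (invariantsEquiv ρ).injective]

/-- Dimension shifting for group cohomology in degrees at least `2`. -/
theorem gc_shift (ρM : Representation ℤ (Multiplicative (Fin r → ℤ)) M)
    (ρJ : Representation ℤ (Multiplicative (Fin r → ℤ)) J)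
    (ρN : Representation ℤ (Multiplicative (Fin r → ℤ)) N)
    (f : ρM.IntertwiningMap ρJ) (g : ρJ.IntertwiningMap ρN)
    (hf : Function.Injective f) (hg : Function.Surjective g)
    (hfg : ∀ m, g m = 0 ↔ ∃ m', f m' = m)
    (hJ : ∀ n, Limits.IsZero (groupCohomology (Rep.of ρJ) (n + 1))) (n : ℕ) :
    Nonempty (groupCohomology (Rep.of ρN) (n + 1) ≃+ groupCohomology (Rep.of ρM) (n + 2)) := by
  obtain ⟨h, hS⟩ := gc_shortExact ρM ρJ ρN f g hf hg hfg
  have := groupCohomology.isIso_δ_of_isZero hS (n + 1) (hJ n) (hJ (n + 1))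
  exact ⟨(asIso (groupCohomology.δ hS (n + 1) (n + 2) rfl)).toLinearEquiv.toAddEquiv⟩

/-- Dimension shifting for group cohomology in degree `1`: the quotient of the invariants of `N` by
the image of the invariants of `J`, both written as Koszul cocycles of degree `0`. -/
theorem gc_one (ρM : Representation ℤ (Multiplicative (Fin r → ℤ)) M)
    (ρJ : Representation ℤ (Multiplicative (Fin r → ℤ)) J)
    (ρN : Representation ℤ (Multiplicative (Fin r → ℤ)) N)
    (f : ρM.IntertwiningMap ρJ) (g : ρJ.IntertwiningMap ρN)
    (hf : Function.Injective f) (hg : Function.Surjective g)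
    (hfg : ∀ m, g m = 0 ↔ ∃ m', f m' = m)
    (hJ : ∀ n, Limits.IsZero (groupCohomology (Rep.of ρJ) (n + 1))) :
    Nonempty (groupCohomology (Rep.of ρM) 1 ≃+ kZ (kτ ρN) 0 ⧸
      (kBlift (kτ ρJ) g.toLinearMap 0).submoduleOf (kZ (kτ ρN) 0)) := by
  obtain ⟨h, hS⟩ := gc_shortExact ρM ρJ ρN f g hf hg hfg
  have hepi := groupCohomology.epi_δ_of_isZero hS 0 (hJ 0)
  rw [ModuleCat.epi_iff_surjective] at hepi
  have hex := groupCohomology.mapShortComplex₃_exact hS (i := 0) rfl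
  rw [ShortComplex.moduleCat_exact_iff] at hex
  let eN : ρN.invariants ≃+ groupCohomology (Rep.of ρN) 0 :=
    (groupCohomology.H0Iso (Rep.of ρN)).symm.toLinearEquiv.toAddEquiv
  let α : ρN.invariants →+ groupCohomology (Rep.of ρM) 1 :=
    (groupCohomology.δ hS 0 1 rfl).hom.toAddMonoidHom.comp eN.toAddMonoidHom
  refine addEquiv_of_surjective α
    ((Submodule.mkQ ((kBlift (kτ ρJ) g.toLinearMap 0).submoduleOf
      (kZ (kτ ρN) 0))).toAddMonoidHom.comp (invariantsEquiv ρN).toAddMonoidHom)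
    (hepi.comp eN.surjective)
    ((Submodule.mkQ_surjective _).comp (invariantsEquiv ρN).surjective) fun p => ?_
  show α p = 0 ↔ Submodule.Quotient.mk (invariantsEquiv ρN p) = 0
  rw [Submodule.Quotient.mk_eq_zero]
  show α p = 0 ↔ (invariantsEquiv ρN p).1 ∈ kBlift (kτ ρJ) g.toLinearMap 0
  rw [mem_kBlift]
  have nat : ∀ y : groupCohomology (Rep.of ρJ) 0,
      (eN.symm (groupCohomology.map (MonoidHom.id _) (Rep.ofHom g) 0 y) : N) =
      g (((groupCohomology.H0Iso (Rep.of ρJ)).hom y : ρJ.invariants) : J) := fun y => by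
    have := groupCohomology.map_id_comp_H0Iso_hom_apply (Rep.ofHom g) y
    exact congrArg Subtype.val this
  constructor
  · intro hp
    obtain ⟨y, hy⟩ := hex (eN p) hp
    have hy' : groupCohomology.map (MonoidHom.id _) (Rep.ofHom g) 0 y = eN p := hy
    have := nat y
    rw [hy', AddEquiv.symm_apply_apply] at this
    let j : ρJ.invariants := (groupCohomology.H0Iso (Rep.of ρJ)).hom y
    refine ⟨(invariantsEquiv ρJ j).1, (invariantsEquiv ρJ j).2, ?_⟩
    ext v
    exact this.symm
  · rintro ⟨b, hb, hb'⟩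
    obtain ⟨j, hj⟩ := (invariantsEquiv ρJ).surjective ⟨b, hb⟩
    let y : groupCohomology (Rep.of ρJ) 0 := (groupCohomology.H0Iso (Rep.of ρJ)).inv j
    have hy : eN.symm (groupCohomology.map (MonoidHom.id _) (Rep.ofHom g) 0 y) = p := by
      refine Subtype.ext ((nat y).trans ?_)
      have h1 : (groupCohomology.H0Iso (Rep.of ρJ)).hom y = j :=
        (groupCohomology.H0Iso (Rep.of ρJ)).inv_hom_id_apply j
      rw [h1]
      have h2 := DFunLike.congr_fun hb' 0
      have h3 : b 0 = j.1 := by rw [← show _ = b from congrArg Subtype.val hj]; rfl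
      rw [LinearMap.compAlternatingMap_apply, h3] at h2
      exact h2
    rw [← hy]
    show groupCohomology.δ hS 0 1 rfl (eN (eN.symm _)) = 0
    rw [AddEquiv.apply_symm_apply]
    exact LinearMap.congr_fun (congrArg ModuleCat.Hom.hom
      (groupCohomology.mapShortComplex₃ hS (i := 0) rfl).zero) y

/-- Koszul cohomology computes group cohomology of `ℤ^r`. Both agree in degree `0` and are shifted in
the same way along the embedding `m ↦ (h ↦ ρ(h) m)` of a module into a coinduced one. -/
theorem gc_koszul (n : ℕ) : ∀ {X : Type} [AddCommGroup X]
    (ρ : Representation ℤ (Multiplicative (Fin r → ℤ)) X),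
    Nonempty (groupCohomology (Rep.of ρ) n ≃+ kH (kτ ρ) n) := by
  induction n with
  | zero => exact fun ρ => gc_zero ρ
  | succ n ih =>
    intro X _ ρ
    let f₀ : X →+ CoindFun r X :=
      { toFun := fun m h => ρ h m
        map_zero' := funext fun h => map_zero _
        map_add' := fun a b => funext fun h => map_add _ _ _ }
    have hf₀ : Function.Injective f₀ := fun a b hab => by
      have : ρ 1 a = ρ 1 b := congrFun hab 1
      simpa using this
    have hρ : ∀ g m, f₀ (ρ g m) = coindRep r X g (f₀ m) := fun g m => funext fun h => by
      show ρ h (ρ g m) = ρ (h * g) m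
      rw [map_mul]; rfl
    let g₀ := QuotientAddGroup.mk' f₀.range
    let ρN : Representation ℤ (Multiplicative (Fin r → ℤ)) (CoindFun r X ⧸ f₀.range) :=
      { toFun := fun g => (QuotientAddGroup.map f₀.range f₀.range
          (coindRep r X g).toAddMonoidHom (by
            rintro _ ⟨m, rfl⟩
            exact ⟨ρ g m, hρ g m⟩)).toIntLinearMap
        map_one' := by
          refine LinearMap.ext fun m => ?_
          obtain ⟨m, rfl⟩ := QuotientAddGroup.mk'_surjective _ m
          show QuotientAddGroup.mk' f₀.range (coindRep r X 1 m) = _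
          rw [map_one]; rfl
        map_mul' := fun a b => by
          refine LinearMap.ext fun m => ?_
          obtain ⟨m, rfl⟩ := QuotientAddGroup.mk'_surjective _ m
          show QuotientAddGroup.mk' f₀.range (coindRep r X (a * b) m) = _
          rw [map_mul]; rfl }
    have hg : ∀ g m, g₀ (coindRep r X g m) = ρN g (g₀ m) := fun g m => rfl
    let f : ρ.IntertwiningMap (coindRep r X) :=
      f₀.toIntLinearMap.intertwiningMap_of_isIntertwiningMap _ _ hρ
    let g : (coindRep r X).IntertwiningMap ρN :=
      g₀.toIntLinearMap.intertwiningMap_of_isIntertwiningMap _ _ hg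
    have hfg : ∀ m, g m = 0 ↔ ∃ m', f m' = m := fun m =>
      (QuotientAddGroup.eq_zero_iff m).trans Iff.rfl
    have hgs : Function.Surjective g := QuotientAddGroup.mk'_surjective _
    have hfτ := kτ_intertwine ρ (coindRep r X) f.toLinearMap hρ
    have hgτ := kτ_intertwine (coindRep r X) ρN g.toLinearMap hg
    obtain ⟨e⟩ := kH_shift (kτ ρ) (kτ (coindRep r X)) (kτ ρN) (kτ_comm _) f.toLinearMap
      g.toLinearMap hf₀ hgs hfg hfτ hgτ coind_acyclic n
    cases n with
    | zero =>
      obtain ⟨e'⟩ := gc_one ρ (coindRep r X) ρN f g hf₀ hgs hfg gc_coind_isZero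
      exact ⟨e'.trans e.symm⟩
    | succ n =>
      obtain ⟨e'⟩ := gc_shift ρ (coindRep r X) ρN f g hf₀ hgs hfg gc_coind_isZero n
      obtain ⟨e''⟩ := ih ρN
      rw [kBlift_succ _ (kτ ρN) (kτ_comm _) _ hgs hgτ coind_acyclic] at e
      exact ⟨e'.symm.trans (e''.trans e.symm)⟩

end Comparison2

/-! ### Guichard's theorem -/

section Guichard

/-- The circles of radius `(2n + 1)π` stay away from the zeros `2πik` of `exp t - 1`. -/
theorem half_le_norm_exp_sub_one (n : ℕ) (t : ℂ) (ht : ‖t‖ = (2 * n + 1) * Real.pi) :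
    1 / 2 ≤ ‖exp t - 1‖ := by
  have hpi := Real.pi_gt_three
  rcases le_or_gt 1 t.re with h1 | h1
  · have h2 : 2 ≤ ‖exp t‖ := by
      rw [norm_exp]
      linarith [Real.add_one_le_exp t.re]
    have := norm_sub_norm_le (exp t) 1
    rw [norm_one] at this
    linarith
  rcases le_or_gt t.re (-1) with h2 | h2
  · have h3 : ‖exp t‖ ≤ 1 / 2 := by
      rw [norm_exp, show t.re = -(-t.re) by ring, Real.exp_neg, one_div]
      exact inv_anti₀ (by norm_num) (by linarith [Real.add_one_le_exp (-t.re)])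
    have := norm_sub_norm_le 1 (exp t)
    rw [norm_one, norm_sub_rev] at this
    linarith
  -- near the imaginary axis `Im t` is close to an odd multiple of `π`, so `Re (exp t) ≤ 0`
  · have hR : 3 < (2 * (n : ℝ) + 1) * Real.pi := by
      nlinarith [Nat.cast_nonneg (α := ℝ) n]
    have hsq : t.re ^ 2 + |t.im| ^ 2 = ((2 * (n : ℝ) + 1) * Real.pi) ^ 2 := by
      rw [← ht, sq_abs, ← normSq_eq_norm_sq, normSq_apply]; ring
    have him : |t.im| ≤ (2 * (n : ℝ) + 1) * Real.pi := ht ▸ abs_im_le_norm t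
    set s := (2 * (n : ℝ) + 1) * Real.pi - |t.im| with hs
    have hs0 : 0 ≤ s := by linarith
    have hs1 : s ≤ 1 := by nlinarith [abs_nonneg t.im]
    have hcos : Real.cos t.im ≤ 0 := by
      rw [← Real.cos_abs, show |t.im| = (Real.pi - s) + n * (2 * Real.pi) by rw [hs]; ring,
        Real.cos_add_nat_mul_two_pi, Real.cos_pi_sub]
      linarith [Real.cos_nonneg_of_neg_pi_div_two_le_of_le (x := s) (by linarith) (by linarith)]
    have hre : (exp t - 1).re ≤ -1 := by
      rw [sub_re, exp_re, one_re]
      nlinarith [Real.exp_pos t.re]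
    have := abs_re_le_norm (exp t - 1)
    rw [abs_of_neg (by linarith)] at this
    linarith

theorem differentiable_integral_mul_exp (k s : ℝ → ℂ) (hk : Continuous k) (hs : Continuous s)
    (a b : ℝ) : Differentiable ℂ fun z : ℂ => ∫ θ in a..b, k θ * exp (z * s θ) := by
  intro z₀
  refine (intervalIntegral.hasDerivAt_integral_of_dominated_loc_of_deriv_le
    (F := fun z θ => k θ * exp (z * s θ)) (F' := fun z θ => k θ * (exp (z * s θ) * s θ))
    (bound := fun θ => ‖k θ‖ * (Real.exp ((‖z₀‖ + 1) * ‖s θ‖) * ‖s θ‖))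
    (Metric.ball_mem_nhds z₀ one_pos) ?_ ?_ ?_ ?_ ?_ ?_).2.differentiableAt
  · exact Filter.Eventually.of_forall fun z => (by fun_prop : Continuous _).aestronglyMeasurable
  · exact (by fun_prop : Continuous _).intervalIntegrable _ _
  · exact (by fun_prop : Continuous _).aestronglyMeasurable
  · refine Filter.Eventually.of_forall fun θ _ z hz => ?_
    rw [norm_mul, norm_mul, norm_exp]
    gcongr
    calc (z * s θ).re ≤ ‖z * s θ‖ := re_le_norm _
      _ = ‖z‖ * ‖s θ‖ := norm_mul _ _
      _ ≤ (‖z₀‖ + 1) * ‖s θ‖ := by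
        gcongr
        have := norm_sub_norm_le z z₀
        rw [Metric.mem_ball, dist_eq] at hz
        linarith
  · exact (by fun_prop : Continuous _).intervalIntegrable _ _
  · refine Filter.Eventually.of_forall fun θ _ z hz => ?_
    refine HasDerivAt.const_mul _ ?_
    have := ((hasDerivAt_id z).mul_const (s θ)).cexp
    simpa using this

/-- The contour integral `(2πi)⁻¹ ∮ exp (zt) / ((exp t - 1) t^(n+1)) dt` over the circle of radius
`(2n + 1)π`. It is an entire function of `z` whose difference `f (z + 1) - f z` is `z^n / n!`. -/
noncomputable def guichardAux (n : ℕ) (z : ℂ) : ℂ :=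
  (2 * Real.pi * I : ℂ)⁻¹ • ∮ t in C(0, (2 * n + 1) * Real.pi),
    exp (z * t) / ((exp t - 1) * t ^ (n + 1))

theorem guichard_radius_pos (n : ℕ) : 0 < (2 * (n : ℝ) + 1) * Real.pi := by
  have := Real.pi_pos
  positivity

theorem guichard_den_ne {n : ℕ} {t : ℂ} (ht : ‖t‖ = (2 * n + 1) * Real.pi) :
    exp t - 1 ≠ 0 ∧ t ≠ 0 := by
  constructor
  · intro h
    have := half_le_norm_exp_sub_one n t ht
    rw [h, norm_zero] at this
    linarith
  · rintro rfl
    have := guichard_radius_pos n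
    rw [norm_zero] at ht
    linarith

theorem norm_circleMap_guichard (n : ℕ) (θ : ℝ) :
    ‖circleMap 0 ((2 * n + 1) * Real.pi) θ‖ = (2 * n + 1) * Real.pi := by
  rw [norm_circleMap_zero, abs_of_pos (guichard_radius_pos n)]

theorem differentiable_guichardAux (n : ℕ) : Differentiable ℂ (guichardAux n) := by
  have := differentiable_integral_mul_exp
    (fun θ => deriv (circleMap 0 ((2 * n + 1) * Real.pi)) θ *
      ((exp (circleMap 0 ((2 * n + 1) * Real.pi) θ) - 1) *
        circleMap 0 ((2 * n + 1) * Real.pi) θ ^ (n + 1))⁻¹)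
    (circleMap 0 ((2 * n + 1) * Real.pi)) ?_ (continuous_circleMap _ _) 0 (2 * Real.pi)
  · refine fun z₀ => ((this.const_smul ((2 * Real.pi * I : ℂ)⁻¹)) z₀).congr_of_eventuallyEq
      (Filter.Eventually.of_forall fun z => ?_)
    rw [guichardAux, circleIntegral]
    refine congrArg _ (intervalIntegral.integral_congr fun θ _ => ?_)
    simp only [smul_eq_mul, div_eq_mul_inv]
    ring
  · simp only [deriv_circleMap]
    refine Continuous.mul (by fun_prop) (Continuous.inv₀ (by fun_prop) fun θ => ?_)
    obtain ⟨h1, h2⟩ := guichard_den_ne (norm_circleMap_guichard n θ)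
    exact mul_ne_zero h1 (pow_ne_zero _ h2)

theorem guichard_circleIntegrable (n : ℕ) (z : ℂ) :
    CircleIntegrable (fun t => exp (z * t) / ((exp t - 1) * t ^ (n + 1))) 0
      ((2 * n + 1) * Real.pi) := by
  refine ContinuousOn.circleIntegrable (guichard_radius_pos n).le ?_
  refine ContinuousOn.div (by fun_prop) (by fun_prop) fun t ht => ?_
  obtain ⟨h1, h2⟩ := guichard_den_ne (n := n) (t := t) (by simpa using ht)
  exact mul_ne_zero h1 (pow_ne_zero _ h2)

/-- In the difference the factor `exp t - 1` cancels, which leaves Cauchy's formula for the `n`-th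
Taylor coefficient of `t ↦ exp (zt)`. -/
theorem guichardAux_diff (n : ℕ) (z : ℂ) :
    guichardAux n (z + 1) - guichardAux n z = (n.factorial : ℂ)⁻¹ * z ^ n := by
  rw [guichardAux, guichardAux, ← smul_sub, ← circleIntegral.integral_sub
    (guichard_circleIntegrable n _) (guichard_circleIntegrable n _)]
  have h := DifferentiableOn.circleIntegral_one_div_sub_center_pow_smul
    (f := fun t => exp (z * t)) (c := 0) (guichard_radius_pos n) n (by fun_prop)
  rw [iteratedDeriv_cexp_const_mul] at h
  rw [circleIntegral.integral_congr (guichard_radius_pos n).le (g := fun t : ℂ =>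
    (1 / (t - 0) ^ (n + 1)) • exp (z * t)), h]
  · have hpi : (Real.pi : ℂ) ≠ 0 := by exact_mod_cast Real.pi_ne_zero
    simp only [mul_zero, exp_zero, mul_one, smul_eq_mul]
    field_simp
  · intro t ht
    obtain ⟨h1, h2⟩ := guichard_den_ne (n := n) (t := t) (by simpa using ht)
    simp only [sub_zero, smul_eq_mul]
    rw [add_mul, one_mul, exp_add]
    field_simp

theorem norm_guichardAux_le (n : ℕ) (z : ℂ) :
    ‖guichardAux n z‖ ≤ 2 * Real.exp (‖z‖ * ((2 * n + 1) * Real.pi)) / n.factorial := by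
  have hR := guichard_radius_pos n
  set R := (2 * (n : ℝ) + 1) * Real.pi with hRdef
  have h1 : ‖guichardAux n z‖ ≤ R * (Real.exp (‖z‖ * R) / (1 / 2 * R ^ (n + 1))) := by
    refine circleIntegral.norm_two_pi_i_inv_smul_integral_le_of_norm_le_const hR.le fun t ht => ?_
    have ht' : ‖t‖ = R := by simpa using ht
    rw [norm_div, norm_mul, norm_pow, ht', norm_exp]
    gcongr
    · rw [← ht', ← norm_mul]; exact re_le_norm _
    · exact half_le_norm_exp_sub_one n t ht'
  have h2 : (n.factorial : ℝ) ≤ R ^ n := by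
    calc (n.factorial : ℝ) ≤ (n : ℝ) ^ n := by exact_mod_cast Nat.factorial_le_pow n
      _ ≤ R ^ n := by
        gcongr
        rw [hRdef]
        nlinarith [Real.pi_gt_three, Nat.cast_nonneg (α := ℝ) n]
  calc _ ≤ _ := h1
    _ = 2 * Real.exp (‖z‖ * R) / R ^ n := by
      rw [pow_succ]
      field_simp
    _ ≤ _ := by gcongr

/-- Guichard's theorem: every entire `g` is the difference `f (z + 1) - f z` of an entire `f`. The
solution is `f = ∑ g⁽ⁿ⁾(0) guichardAux n`; it converges because the growth of `guichardAux n` is only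
exponential in `n` beyond the factor `1 / n!`. -/
theorem guichard (g : ℂ → ℂ) (hg : Differentiable ℂ g) :
    ∃ f : ℂ → ℂ, Differentiable ℂ f ∧ ∀ z, f (z + 1) - f z = g z := by
  let b : ℕ → ℂ := fun n => iteratedDeriv n g 0
  have htaylor : ∀ z, HasSum (fun n : ℕ => b n * ((n.factorial : ℂ)⁻¹ * z ^ n)) (g z) := fun z => by
    have := hasSum_taylorSeries_of_entire hg 0 z
    have e : (fun n : ℕ => b n * ((n.factorial : ℂ)⁻¹ * z ^ n)) =
        fun n : ℕ => (n.factorial : ℂ)⁻¹ • (z - 0) ^ n • iteratedDeriv n g 0 := funext fun n => by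
      simp only [b, smul_eq_mul, sub_zero]
      ring
    rwa [e]
  let u : ℝ → ℕ → ℝ := fun ρ n =>
    2 * Real.exp (ρ * Real.pi) * ‖b n * ((n.factorial : ℂ)⁻¹ * (Real.exp (ρ * (2 * Real.pi)) : ℂ) ^ n)‖
  have hu : ∀ ρ, Summable (u ρ) := fun ρ => (htaylor _).summable.norm.mul_left _
  have hbound : ∀ ρ z, ‖z‖ ≤ ρ → ∀ n, ‖b n * guichardAux n z‖ ≤ u ρ n := fun ρ z hz n => by
    have h1 := norm_guichardAux_le n z
    have h2 : Real.exp (‖z‖ * ((2 * n + 1) * Real.pi)) ≤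
        Real.exp (ρ * Real.pi) * Real.exp (ρ * (2 * Real.pi)) ^ n := by
      rw [← Real.exp_nat_mul, ← Real.exp_add]
      gcongr
      have := guichard_radius_pos n
      nlinarith
    calc ‖b n * guichardAux n z‖ ≤ ‖b n‖ * (2 * (Real.exp (ρ * Real.pi) *
          Real.exp (ρ * (2 * Real.pi)) ^ n) / n.factorial) := by
          rw [norm_mul]; gcongr; exact h1.trans (by gcongr)
      _ = u ρ n := by
        simp only [u, norm_mul, norm_inv, norm_pow, Complex.norm_natCast, norm_real, Real.norm_eq_abs,
          Real.abs_exp]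
        ring
  have hsum : ∀ z, Summable fun n => b n * guichardAux n z := fun z =>
    (hu ‖z‖).of_norm_bounded (hbound _ z le_rfl)
  refine ⟨fun z => ∑' n, b n * guichardAux n z, fun z => ?_, fun z => ?_⟩
  · have := differentiableOn_tsum_of_summable_norm (U := Metric.ball (0 : ℂ) (‖z‖ + 1))
      (F := fun n z => b n * guichardAux n z) (hu (‖z‖ + 1))
      (fun n => ((differentiable_guichardAux n).const_mul _).differentiableOn) Metric.isOpen_ball
      (fun n w hw => hbound _ w (by simpa using (Metric.mem_ball.1 hw).le) n)
    exact this.differentiableAt (Metric.isOpen_ball.mem_nhds (by simp))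
  · beta_reduce
    rw [← (hsum (z + 1)).tsum_sub (hsum z), ← (htaylor z).tsum_eq]
    refine tsum_congr fun n => ?_
    rw [← mul_sub, guichardAux_diff]

end Guichard

/-! ### Periodic entire functions -/

section PeriodicEntire

/-- The character `z ↦ exp (2πinz)`. -/
noncomputable def perExp (n : ℤ) (z : ℂ) : ℂ := exp (2 * Real.pi * I * n * z)

theorem perExp_add (n : ℤ) (z w : ℂ) : perExp n (z + w) = perExp n z * perExp n w := by
  rw [perExp, mul_add, exp_add]; rfl

theorem perExp_one (n : ℤ) : perExp n 1 = 1 := by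
  rw [perExp, mul_one, mul_comm]
  exact exp_int_mul_two_pi_mul_I n

theorem perExp_neg (n : ℤ) (z : ℂ) : perExp (-n) z * perExp n z = 1 := by
  rw [perExp, perExp, ← exp_add, ← exp_zero]
  congr 1
  push_cast
  ring

theorem differentiable_perExp (n : ℤ) : Differentiable ℂ (perExp n) := by
  unfold perExp
  fun_prop

theorem norm_perExp (n : ℤ) (z : ℂ) : ‖perExp n z‖ = Real.exp (-(2 * Real.pi * n * z.im)) := by
  rw [perExp, norm_exp]
  congr 1
  have : (2 * Real.pi * I * n * z : ℂ) = ((2 * Real.pi * n : ℝ) : ℂ) * (I * z) := by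
    push_cast; ring
  rw [this, re_ofReal_mul, I_mul_re]
  ring

/-- Fourier coefficient of a periodic entire function, taken on the real line. -/
noncomputable def perCoeff (g : ℂ → ℂ) (n : ℤ) : ℂ :=
  ∫ x in (0 : ℝ)..1, g x * perExp (-n) x

/-- The Fourier coefficient may be computed on any horizontal line, by Cauchy's theorem on a
rectangle of width one. -/
theorem perCoeff_eq {g : ℂ → ℂ} (hg : Differentiable ℂ g) (hp : ∀ z, g (z + 1) = g z) (n : ℤ)
    (y : ℝ) : perCoeff g n = ∫ x in (0 : ℝ)..1, g (x + y * I) * perExp (-n) (x + y * I) := by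
  have h := integral_boundary_rect_eq_zero_of_differentiableOn
    (fun z => g z * perExp (-n) z) 0 (1 + y * I)
    (hg.mul (differentiable_perExp (-n))).differentiableOn
  simp only [zero_re, zero_im, add_re, one_re, mul_re, ofReal_re, I_re, mul_zero, ofReal_im, I_im,
    mul_one, sub_self, add_zero, add_im, one_im, mul_im, zero_add, ofReal_zero, zero_mul,
    ofReal_one] at h
  have e : ∀ t : ℝ, g (1 + t * I) * perExp (-n) (1 + t * I) = g (t * I) * perExp (-n) (t * I) :=
    fun t => by rw [add_comm, hp, perExp_add, perExp_one, mul_one]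
  simp only [e, add_sub_cancel_right] at h
  exact sub_eq_zero.1 h

/-- The Fourier coefficients decay faster than any exponential, as seen by moving the line of
integration to height `±Y`. -/
theorem exists_norm_perCoeff_le {g : ℂ → ℂ} (hg : Differentiable ℂ g)
    (hp : ∀ z, g (z + 1) = g z) (Y : ℝ) :
    ∃ C : ℝ, 0 ≤ C ∧ ∀ n : ℤ, ‖perCoeff g n‖ ≤ C * Real.exp (-(2 * Real.pi * |(n : ℝ)| * Y)) := by
  have hb : ∀ y : ℝ, ∃ C : ℝ, ∀ x ∈ Set.Icc (0 : ℝ) 1, ‖g (x + y * I)‖ ≤ C := fun y =>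
    isCompact_Icc.exists_bound_of_continuousOn
      (hg.continuous.comp (by fun_prop : Continuous fun x : ℝ => (x + y * I : ℂ))).continuousOn
  obtain ⟨C₁, h₁⟩ := hb Y
  obtain ⟨C₂, h₂⟩ := hb (-Y)
  have key : ∀ (n : ℤ) (y C : ℝ), (∀ x ∈ Set.Icc (0 : ℝ) 1, ‖g (x + y * I)‖ ≤ C) →
      ‖perCoeff g n‖ ≤ C * Real.exp (2 * Real.pi * n * y) := fun n y C h => by
    rw [perCoeff_eq hg hp n y]
    have := intervalIntegral.norm_integral_le_of_norm_le_const (a := (0 : ℝ)) (b := 1)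
      (C := C * Real.exp (2 * Real.pi * n * y))
      (f := fun x : ℝ => g (x + y * I) * perExp (-n) (x + y * I)) fun x hx => by
        rw [Set.uIoc_of_le zero_le_one] at hx
        rw [norm_mul, norm_perExp]
        have e : -(2 * Real.pi * ((-n : ℤ) : ℝ) * ((x : ℂ) + y * I).im) = 2 * Real.pi * n * y := by
          simp
        rw [e]
        gcongr
        exact h x ⟨hx.1.le, hx.2⟩
    simpa using this
  have hC₁ : 0 ≤ C₁ := (norm_nonneg _).trans (h₁ 0 (by simp))
  refine ⟨max C₁ C₂, hC₁.trans (le_max_left _ _), fun n => ?_⟩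
  rcases le_total 0 (n : ℝ) with hn | hn
  · rw [abs_of_nonneg hn]
    refine (key n (-Y) C₂ h₂).trans ?_
    rw [mul_neg]
    gcongr
    exact le_max_right _ _
  · rw [abs_of_nonpos hn]
    refine (key n Y C₁ h₁).trans ?_
    rw [show -(2 * Real.pi * -(n : ℝ) * Y) = 2 * Real.pi * n * Y by ring]
    gcongr
    exact le_max_left _ _

theorem summable_exp_neg_abs : Summable fun n : ℤ => Real.exp (-(2 * Real.pi * |(n : ℝ)|)) := by
  have h : Summable fun n : ℕ => Real.exp (-(2 * Real.pi * (n : ℝ))) := by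
    have := Real.summable_exp_nat_mul_iff (a := -(2 * Real.pi)) |>.2 (by linarith [Real.pi_pos])
    refine this.congr fun n => ?_
    congr 1; ring
  exact Summable.of_nat_of_neg (by simpa using h) (by simpa using h)

theorem exists_perCoeff_mul_perExp_le {g : ℂ → ℂ} (hg : Differentiable ℂ g)
    (hp : ∀ z, g (z + 1) = g z) (ρ : ℝ) :
    ∃ C : ℝ, 0 ≤ C ∧ ∀ (n : ℤ) (z : ℂ), |z.im| ≤ ρ →
      ‖perCoeff g n * perExp n z‖ ≤ C * Real.exp (-(2 * Real.pi * |(n : ℝ)|)) := by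
  obtain ⟨C, hC, h⟩ := exists_norm_perCoeff_le hg hp (ρ + 1)
  refine ⟨C, hC, fun n z hz => ?_⟩
  rw [norm_mul, norm_perExp]
  calc _ ≤ C * Real.exp (-(2 * Real.pi * |(n : ℝ)| * (ρ + 1))) *
        Real.exp (2 * Real.pi * |(n : ℝ)| * ρ) := by
        gcongr
        · exact h n
        · have h1 : -(n * z.im) ≤ |(n : ℝ)| * ρ :=
            calc -(n * z.im) ≤ |(n : ℝ) * z.im| := neg_le_abs _
              _ = |(n : ℝ)| * |z.im| := abs_mul _ _
              _ ≤ _ := by gcongr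
          nlinarith [Real.pi_pos]
    _ = _ := by
      rw [mul_assoc, ← Real.exp_add]
      congr 2; ring

/-- Fourier expansion of a periodic entire function. -/
theorem hasSum_perCoeff {g : ℂ → ℂ} (hg : Differentiable ℂ g) (hp : ∀ z, g (z + 1) = g z)
    (z : ℂ) : HasSum (fun n : ℤ => perCoeff g n * perExp n z) (g z) := by
  have : Fact (0 < (1 : ℝ)) := ⟨one_pos⟩
  have hper : Function.Periodic (fun x : ℝ => g (x + z.im * I)) 1 := fun x => by
    have := hp (x + z.im * I)
    beta_reduce
    rw [← this]
    congr 1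
    push_cast
    ring
  have hcont : Continuous (fun x : ℝ => g (x + z.im * I)) :=
    hg.continuous.comp (by fun_prop)
  let G : C(AddCircle (1 : ℝ), ℂ) := ⟨hper.lift, continuous_coinduced_dom.2 hcont⟩
  have hG : ∀ x : ℝ, G (x : AddCircle (1 : ℝ)) = g (x + z.im * I) := fun x => rfl
  have hco : ∀ n : ℤ, fourierCoeff G n = perCoeff g n * perExp n (z.im * I) := fun n => by
    rw [fourierCoeff_eq_intervalIntegral _ n 0, perCoeff_eq hg hp n z.im,
      ← intervalIntegral.integral_mul_const]
    simp only [div_one, one_smul, zero_add]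
    refine intervalIntegral.integral_congr fun x _ => ?_
    simp only [hG, fourier_coe_apply, smul_eq_mul]
    have e : exp (2 * Real.pi * I * ((-n : ℤ) : ℂ) * x / (1 : ℝ)) = perExp (-n) x := by
      rw [perExp]; simp
    rw [e, perExp_add]
    linear_combination -(g (x + z.im * I) * perExp (-n) x) * perExp_neg n (z.im * I)
  obtain ⟨C, -, hC⟩ := exists_perCoeff_mul_perExp_le hg hp |z.im|
  have hs : Summable (fourierCoeff G) := by
    refine (summable_exp_neg_abs.mul_left C).of_norm_bounded fun n => ?_
    rw [hco]
    exact hC n _ (by simp)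
  have := has_pointwise_sum_fourier_series_of_summable hs (z.re : AddCircle (1 : ℝ))
  rw [hG, re_add_im] at this
  have e : (fun n : ℤ => perCoeff g n * perExp n z) =
      fun n : ℤ => fourierCoeff G n • fourier n (z.re : AddCircle (1 : ℝ)) := funext fun n => by
    have e' : exp (2 * Real.pi * I * n * z.re / (1 : ℝ)) = perExp n z.re := by
      rw [perExp]; simp
    rw [hco, fourier_coe_apply, e', smul_eq_mul, mul_assoc, ← perExp_add, add_comm, re_add_im]
  rwa [e]

theorem exists_le_norm_perExp_sub_one {τ : ℂ} (hτ : τ.im ≠ 0) :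
    ∃ c : ℝ, 0 < c ∧ ∀ n : ℤ, n ≠ 0 → c ≤ ‖perExp n τ - 1‖ := by
  set δ := 2 * Real.pi * |τ.im| with hδ
  have hδ0 : 0 < δ := by have := abs_pos.2 hτ; have := Real.pi_pos; positivity
  have hlt : Real.exp (-δ) < 1 := by rw [Real.exp_lt_one_iff]; linarith
  refine ⟨1 - Real.exp (-δ), by linarith, fun n hn => ?_⟩
  have hn' : δ ≤ |2 * Real.pi * n * τ.im| := by
    have h1 : (1 : ℝ) ≤ |(n : ℝ)| := by exact_mod_cast Int.one_le_abs hn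
    rw [abs_mul, abs_mul, abs_of_pos Real.two_pi_pos, hδ]
    have := mul_nonneg Real.two_pi_pos.le (abs_nonneg τ.im)
    nlinarith
  have hN := norm_perExp n τ
  rcases le_total 0 (2 * Real.pi * n * τ.im) with h | h
  · rw [abs_of_nonneg h] at hn'
    have h2 : ‖perExp n τ‖ ≤ Real.exp (-δ) := by rw [hN]; gcongr
    have := norm_sub_norm_le 1 (perExp n τ)
    rw [norm_one, norm_sub_rev] at this
    linarith
  · rw [abs_of_nonpos h] at hn'
    have h2 : Real.exp δ ≤ ‖perExp n τ‖ := by rw [hN]; gcongr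
    have := norm_sub_norm_le (perExp n τ) 1
    rw [norm_one] at this
    have := Real.add_one_le_exp δ
    have := Real.add_one_le_exp (-δ)
    have h3 : 2 ≤ Real.exp δ + Real.exp (-δ) := by linarith
    linarith

/-- A `1`-periodic entire function is a constant plus the `τ`-difference of a `1`-periodic entire
function, obtained by dividing the Fourier coefficients with `n ≠ 0` by `exp (2πinτ) - 1`. Since
`τ` is not real, these denominators are bounded away from `0`. -/
theorem periodic_difference {g : ℂ → ℂ} (hg : Differentiable ℂ g) (hp : ∀ z, g (z + 1) = g z)
    {τ : ℂ} (hτ : τ.im ≠ 0) :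
    ∃ (k : ℂ) (f : ℂ → ℂ), Differentiable ℂ f ∧ (∀ z, f (z + 1) = f z) ∧
      ∀ z, g z = k + (f (z + τ) - f z) := by
  obtain ⟨c, hc, hcn⟩ := exists_le_norm_perExp_sub_one hτ
  -- the term `n = 0` vanishes because its denominator is `0`
  let t : ℤ → ℂ → ℂ := fun n z => (perExp n τ - 1)⁻¹ * (perCoeff g n * perExp n z)
  have ht0 : ∀ z, t 0 z = 0 := fun z => by simp [t, perExp]
  have hb : ∀ ρ : ℝ, ∃ C : ℝ, ∀ (n : ℤ) (z : ℂ), |z.im| ≤ ρ →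
      ‖t n z‖ ≤ C * Real.exp (-(2 * Real.pi * |(n : ℝ)|)) := fun ρ => by
    obtain ⟨C, hC0, hC⟩ := exists_perCoeff_mul_perExp_le hg hp ρ
    refine ⟨c⁻¹ * C, fun n z hz => ?_⟩
    by_cases hn : n = 0
    · subst hn; rw [ht0, norm_zero]; positivity
    · rw [norm_mul, norm_inv, mul_assoc]
      gcongr
      · exact hcn n hn
      · exact hC n z hz
  have hsum : ∀ z, Summable fun n => t n z := fun z => by
    obtain ⟨C, hC⟩ := hb |z.im|
    exact (summable_exp_neg_abs.mul_left C).of_norm_bounded fun n => hC n z le_rfl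
  refine ⟨perCoeff g 0, fun z => ∑' n, t n z, fun z => ?_, fun z => ?_, fun z => ?_⟩
  · obtain ⟨C, hC⟩ := hb (‖z‖ + 1)
    have := differentiableOn_tsum_of_summable_norm (U := Metric.ball (0 : ℂ) (‖z‖ + 1))
      (F := t) (summable_exp_neg_abs.mul_left C)
      (fun n => (((differentiable_perExp n).const_mul _).const_mul _).differentiableOn)
      Metric.isOpen_ball
      (fun n w hw => hC n w ((abs_im_le_norm w).trans (by simpa using (Metric.mem_ball.1 hw).le)))
    exact this.differentiableAt (Metric.isOpen_ball.mem_nhds (by simp))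
  · refine tsum_congr fun n => ?_
    simp only [t, perExp_add, perExp_one, mul_one]
  · beta_reduce
    rw [← (hsum (z + τ)).tsum_sub (hsum z)]
    have h1 := (hasSum_perCoeff hg hp z)
    have h2 : ∀ n, t n (z + τ) - t n z =
        perCoeff g n * perExp n z - if n = 0 then perCoeff g 0 else 0 := fun n => by
      by_cases hn : n = 0
      · subst hn
        rw [ht0, ht0]
        simp [perExp]
      · have h3 : perExp n τ - 1 ≠ 0 := fun h => by
          have := hcn n hn
          rw [h, norm_zero] at this
          linarith
        rw [if_neg hn]
        simp only [t, perExp_add]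
        field_simp
        ring
    simp only [h2]
    rw [(h1.sub (hasSum_ite_eq 0 (perCoeff g 0))).tsum_eq]
    ring

end PeriodicEntire

/-! ### Difference equations, logarithms and lattices -/

section LatticeFunctions

/-- Guichard's theorem for an arbitrary nonzero step. -/
theorem guichard_step {p : ℂ} (hp : p ≠ 0) {g : ℂ → ℂ} (hg : Differentiable ℂ g) :
    ∃ f : ℂ → ℂ, Differentiable ℂ f ∧ ∀ z, f (z + p) - f z = g z := by
  obtain ⟨f, hf, h⟩ := guichard (fun z => g (p * z)) (by fun_prop)
  refine ⟨fun z => f (z / p), by fun_prop, fun z => ?_⟩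
  have := h (z / p)
  rw [mul_div_cancel₀ z hp] at this
  beta_reduce
  rw [← this, add_div, div_self hp]

theorem periodic_difference_step {p w : ℂ} (hp : p ≠ 0) (hw : (w / p).im ≠ 0) {g : ℂ → ℂ}
    (hg : Differentiable ℂ g) (hper : ∀ z, g (z + p) = g z) :
    ∃ (k : ℂ) (f : ℂ → ℂ), Differentiable ℂ f ∧ (∀ z, f (z + p) = f z) ∧
      ∀ z, g z = k + (f (z + w) - f z) := by
  obtain ⟨k, f, hf, h1, h2⟩ := periodic_difference (g := fun z => g (p * z)) (by fun_prop)
    (fun z => by rw [mul_add, mul_one, hper]) hw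
  refine ⟨k, fun z => f (z / p), by fun_prop, fun z => ?_, fun z => ?_⟩
  · beta_reduce
    rw [add_div, div_self hp, h1]
  · have := h2 (z / p)
    rw [mul_div_cancel₀ z hp] at this
    beta_reduce
    rw [this, add_div]

/-- An entire function with two `ℝ`-independent periods is bounded, hence constant by Liouville. -/
theorem doubly_periodic_const {p w : ℂ} (hp : p ≠ 0) (hw : (w / p).im ≠ 0) {f : ℂ → ℂ}
    (hf : Differentiable ℂ f) (h1 : ∀ z, f (z + p) = f z) (h2 : ∀ z, f (z + w) = f z) (z : ℂ) :
    f z = f 0 := by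
  refine hf.apply_eq_apply_of_bounded ?_ z 0
  have hK : IsCompact ((fun st : ℝ × ℝ => (st.1 * p + st.2 * w : ℂ)) ''
      (Set.Icc 0 1 ×ˢ Set.Icc 0 1)) :=
    (isCompact_Icc.prod isCompact_Icc).image (by fun_prop)
  refine (hK.image hf.continuous).isBounded.subset ?_
  rintro _ ⟨z, rfl⟩
  obtain ⟨s, t, hst⟩ : ∃ s t : ℝ, z = s * p + t * w := by
    set τ := w / p with hτ
    have hwp : w = τ * p := by rw [hτ, div_mul_cancel₀ _ hp]
    refine ⟨(z / p).re - (z / p).im / τ.im * τ.re, (z / p).im / τ.im, ?_⟩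
    have : z / p = ((z / p).re - (z / p).im / τ.im * τ.re : ℝ) +
        ((z / p).im / τ.im : ℝ) * τ := by
      apply Complex.ext
      · simp
      · simp [hw]
    rw [hwp, ← mul_assoc, ← add_mul, ← this, div_mul_cancel₀ _ hp]
  refine ⟨_, ⟨(Int.fract s, Int.fract t), ⟨⟨Int.fract_nonneg s, (Int.fract_lt_one s).le⟩,
    ⟨Int.fract_nonneg t, (Int.fract_lt_one t).le⟩⟩, rfl⟩, ?_⟩
  have e : z = (Int.fract s * p + Int.fract t * w : ℂ) + (⌊s⌋ : ℂ) * p + (⌊t⌋ : ℂ) * w := by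
    have hs : (s : ℂ) = Int.fract s + ⌊s⌋ := by exact_mod_cast (Int.fract_add_floor s).symm
    have ht : (t : ℂ) = Int.fract t + ⌊t⌋ := by exact_mod_cast (Int.fract_add_floor t).symm
    rw [hst, hs, ht]
    ring
  have P1 : Function.Periodic f p := h1
  have P2 : Function.Periodic f w := h2
  rw [e, P2.int_mul _ _, P1.int_mul _ _]

/-- The derivative of `f` is doubly periodic, so `f` is affine, and being periodic it is constant. -/
theorem quasi_period_eq_zero {p w k : ℂ} (hp : p ≠ 0) (hw : (w / p).im ≠ 0) {f : ℂ → ℂ}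
    (hf : Differentiable ℂ f) (h1 : ∀ z, f (z + p) = f z) (h2 : ∀ z, f (z + w) - f z = k) :
    k = 0 := by
  have d1 : ∀ z, deriv f (z + p) = deriv f z := fun z => by
    rw [← deriv_comp_add_const]
    exact congrArg (fun g => deriv g z) (funext h1)
  have d2 : ∀ z, deriv f (z + w) = deriv f z := fun z => by
    rw [← deriv_comp_add_const, ← deriv_add_const (f := f) (c := k)]
    exact congrArg (fun g => deriv g z) (funext fun z => by rw [← h2 z]; ring)
  have hc := doubly_periodic_const hp hw hf.deriv d1 d2
  set α := deriv f 0 with hα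
  have hlin : ∀ z, f z = f 0 + α * z := fun z => by
    have := is_const_of_deriv_eq_zero (f := fun z => f z - α * z) (by fun_prop) (fun z => by
      rw [deriv_fun_sub hf.differentiableAt (by fun_prop), hc z, deriv_const_mul _ (by fun_prop)]
      simp) z 0
    linear_combination this
  have hα0 : α = 0 := by
    have := h1 0
    rw [hlin (0 + p), hlin 0] at this
    have : α * p = 0 := by linear_combination this
    exact (mul_eq_zero.1 this).resolve_right hp
  rw [← h2 0, hlin (0 + w), hα0]
  simp

theorem exists_entire_primitive {g : ℂ → ℂ} (hg : Differentiable ℂ g) :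
    ∃ f : ℂ → ℂ, Differentiable ℂ f ∧ deriv f = g := by
  obtain ⟨f, hf⟩ := hg.isExactOn_univ
  exact ⟨f, fun z => (hf z trivial).differentiableAt, funext fun z => (hf z trivial).deriv⟩

/-- A nowhere-vanishing entire function has an entire logarithm, a primitive of `u' / u`. -/
theorem exists_entire_log {u : ℂ → ℂ} (hu : Differentiable ℂ u) (h0 : ∀ z, u z ≠ 0) :
    ∃ f : ℂ → ℂ, Differentiable ℂ f ∧ ∀ z, exp (2 * Real.pi * I * f z) = u z := by
  obtain ⟨f, hf, hd⟩ := exists_entire_primitive (hu.deriv.fun_div hu h0)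
  have hconst : ∀ z, u z * exp (-f z) = u 0 * exp (-f 0) := fun z =>
    is_const_of_deriv_eq_zero (f := fun z => u z * exp (-f z)) (by fun_prop) (fun z => by
      have h1 := (hu z).hasDerivAt.mul (hf z).hasDerivAt.neg.cexp
      rw [hd] at h1
      refine h1.deriv.trans ?_
      have := h0 z
      simp only [Pi.neg_apply]
      field_simp
      ring) z 0
  have hpi : (Real.pi : ℂ) ≠ 0 := by exact_mod_cast Real.pi_ne_zero
  refine ⟨fun z => (2 * Real.pi * I)⁻¹ * (f z + (log (u 0) - f 0)), by fun_prop, fun z => ?_⟩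
  rw [mul_inv_cancel_left₀ (by simp [hpi]), exp_add, exp_sub, exp_log (h0 0)]
  have := hconst z
  rw [exp_neg, exp_neg] at this
  have e1 := exp_ne_zero (f z)
  have e2 := exp_ne_zero (f 0)
  field_simp at this ⊢
  linear_combination -this

/-- An entire function with `exp (2πif) = 1` is an integer constant. -/
theorem exists_int_of_exp_eq_one {f : ℂ → ℂ} (hf : Differentiable ℂ f)
    (h : ∀ z, exp (2 * Real.pi * I * f z) = 1) : ∃ n : ℤ, ∀ z, f z = n := by
  have hpi : (Real.pi : ℂ) ≠ 0 := by exact_mod_cast Real.pi_ne_zero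
  have hd : ∀ z, deriv f z = 0 := fun z => by
    have h1 : HasDerivAt (fun z => exp (2 * Real.pi * I * f z))
        (exp (2 * Real.pi * I * f z) * (2 * Real.pi * I * deriv f z)) z :=
      ((hf z).hasDerivAt.const_mul _).cexp
    have h2 := h1.deriv
    rw [h z, funext h] at h2
    simpa [hpi] using h2.symm
  obtain ⟨n, hn⟩ := exp_eq_one_iff.1 (h 0)
  refine ⟨n, fun z => ?_⟩
  rw [is_const_of_deriv_eq_zero hf hd z 0]
  have : (2 * Real.pi * I : ℂ) ≠ 0 := by simp [hpi]
  refine mul_left_cancel₀ this ?_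
  rw [hn]; ring

/-- Among complex numbers spanning `ℂ` over `ℝ` there are two independent ones. -/
theorem exists_im_div_ne_zero {r : ℕ} {x : Fin r → ℂ}
    (h : Submodule.span ℝ (Set.range x) = ⊤) :
    ∃ a b, x a ≠ 0 ∧ (x b / x a).im ≠ 0 := by
  obtain ⟨a, ha⟩ : ∃ a, x a ≠ 0 := by
    by_contra! hc
    have : Submodule.span ℝ (Set.range x) ≤ ⊥ :=
      Submodule.span_le.2 (by rintro _ ⟨j, rfl⟩; simp [hc j])
    rw [h] at this
    have := this (Submodule.mem_top (x := (1 : ℂ)))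
    simp at this
  refine ⟨a, ?_⟩
  by_contra! hc
  have : Submodule.span ℝ (Set.range x) ≤
      LinearMap.ker (imLm ∘ₗ (LinearMap.mulRight ℝ (x a)⁻¹)) :=
    Submodule.span_le.2 (by
      rintro _ ⟨j, rfl⟩
      have := hc j ha
      rw [div_eq_mul_inv] at this
      simpa using this)
  rw [h] at this
  have := this (Submodule.mem_top (x := I * x a))
  simp [ha] at this

end LatticeFunctions

/-! ### Reduction to constant cochains -/

section ConstantClasses

variable {r : ℕ} {M K U : Type*} [AddCommGroup M] [AddCommGroup K] [AddCommGroup U]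

theorem kd_comp_of_trivial {T : (Fin r → ℤ) →ₗ[ℤ] Module.End ℤ M} {j : K →ₗ[ℤ] M}
    (hTj : ∀ v k, T v (j k) = 0) {n : ℕ} (c : KC r K n) : kd T (j.compAlternatingMap c) = 0 := by
  ext v
  simp [kd_apply, hTj]

theorem kB_le_kZ (T : (Fin r → ℤ) →ₗ[ℤ] Module.End ℤ M)
    (hT : ∀ v w m, T v (T w m) = T w (T v m)) {n : ℕ} {c : KC r M n} (hc : c ∈ kB T n) :
    kd T c = 0 := by
  cases n with
  | zero =>
    have : c = 0 := hc
    rw [this, map_zero]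
  | succ n =>
    obtain ⟨b, rfl⟩ := hc
    exact kd_kd T hT b

theorem kB_comp {T : (Fin r → ℤ) →ₗ[ℤ] Module.End ℤ M} {T' : (Fin r → ℤ) →ₗ[ℤ] Module.End ℤ K}
    (φ : M →ₗ[ℤ] K) (h : ∀ v m, φ (T v m) = T' v (φ m)) {n : ℕ} {c : KC r M n}
    (hc : c ∈ kB T n) : φ.compAlternatingMap c ∈ kB T' n := by
  cases n with
  | zero =>
    have : c = 0 := hc
    subst this
    have : φ.compAlternatingMap (0 : KC r M 0) = 0 := by ext; simp
    rw [this]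
    exact Submodule.zero_mem _
  | succ n =>
    obtain ⟨b, rfl⟩ := hc
    exact ⟨_, kd_comp φ h b⟩

theorem kB_lift {T : (Fin r → ℤ) →ₗ[ℤ] Module.End ℤ M} {T' : (Fin r → ℤ) →ₗ[ℤ] Module.End ℤ K}
    (φ : M →ₗ[ℤ] K) (hφ : Function.Surjective φ) (h : ∀ v m, φ (T v m) = T' v (φ m)) {n : ℕ}
    {c : KC r K n} (hc : c ∈ kB T' n) : ∃ b ∈ kB T n, φ.compAlternatingMap b = c := by
  cases n with
  | zero =>
    have : c = 0 := hc
    exact ⟨0, Submodule.zero_mem _, by subst this; ext; simp⟩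
  | succ n =>
    obtain ⟨b, rfl⟩ := hc
    obtain ⟨b', rfl⟩ := kc_lift φ hφ b
    exact ⟨kd T b', ⟨b', rfl⟩, (kd_comp φ h b').symm⟩

/-- Every cocycle is cohomologous to one with constant values. Here `M` stands for the entire
functions, `j : K → M` for the inclusion of the constants and `T v` for the difference operators.
By `hG` the cocycle can be made to vanish in direction `a`, and then its values are `a`-periodic.
By `hP` these values split into a constant and a `b`-difference of an `a`-periodic function. The
part made of differences can be made to vanish in direction `b` too; its values are then doubly
periodic, hence constant by `hC`, and zero by `hQ`. -/
theorem cocycle_eq_const_add (T : (Fin r → ℤ) →ₗ[ℤ] Module.End ℤ M)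
    (hT : ∀ v w m, T v (T w m) = T w (T v m)) (j : K →ₗ[ℤ] M) (hj : Function.Injective j)
    (hTj : ∀ v k, T v (j k) = 0) (a b : Fin r)
    (hG : ∀ g, ∃ f, T (stdE a) f = g)
    (hP : ∀ g, T (stdE a) g = 0 → ∃ k f, T (stdE a) f = 0 ∧ g = j k + T (stdE b) f)
    (hC : ∀ f, T (stdE a) f = 0 → T (stdE b) f = 0 → ∃ k, j k = f)
    (hQ : ∀ f k, T (stdE a) f = 0 → T (stdE b) f = j k → k = 0)
    (n : ℕ) (c : KC r M n) (hc : kd T c = 0) :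
    ∃ k : KC r K n, c - j.compAlternatingMap k ∈ kB T n := by
  cases n with
  | zero =>
    have h0 : ∀ w v, T w (c v) = 0 := fun w v => by
      have := DFunLike.congr_fun hc (fun _ => w)
      rw [kd_apply] at this
      simpa [Subsingleton.elim v ((0 : Fin 1).removeNth fun _ : Fin 1 => w)] using this
    obtain ⟨k, rfl⟩ := kc_lift_sub j hj c fun v => hC _ (h0 _ v) (h0 _ v)
    exact ⟨k, by rw [sub_self]; exact Submodule.zero_mem _⟩
  | succ n =>
    obtain ⟨b₁, -, hb₁⟩ := kc_normalize T ⊤ ∅ (by simp) a (by simp)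
      (fun m _ => by obtain ⟨f, hf⟩ := hG m; exact ⟨f, trivial, hf⟩) c (by simp)
      (fun v k l hl _ => absurd hl (Set.notMem_empty l))
    set c₁ := c - kd T b₁ with hc₁
    have hdc₁ : kd T c₁ = 0 := by rw [hc₁, map_sub, hc, kd_kd T hT, sub_zero]
    rw [insert_empty_eq] at hb₁
    let P : Submodule ℤ M := LinearMap.ker (T (stdE a))
    have hPT : ∀ v, ∀ m ∈ P, T v m ∈ P := fun v m hm => by
      show T (stdE a) (T v m) = 0
      rw [hT, show T (stdE a) m = 0 from hm, map_zero]
    have hc₁P : ∀ v, c₁ v ∈ P := fun v => kc_ker_of_off T (Set.mem_singleton a) hdc₁ hb₁ v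
    -- split `c₁` into a constant part and a part with values in `T_b P`
    let φ : K × P →ₗ[ℤ] P := LinearMap.codRestrict P
      (j.comp (LinearMap.fst ℤ K P) + (T (stdE b)).comp (P.subtype.comp (LinearMap.snd ℤ K P)))
      (fun x => P.add_mem (hTj _ _) (hPT _ _ x.2.2))
    have hφ : Function.Surjective φ := by
      rintro ⟨g, hg⟩
      obtain ⟨k, f, hf, h⟩ := hP g hg
      exact ⟨(k, ⟨f, hf⟩), Subtype.ext h.symm⟩
    obtain ⟨kf, hkf⟩ := kc_lift φ hφ (c₁.codRestrict P hc₁P)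
    have hkf' : ∀ v, j (kf v).1 + T (stdE b) (kf v).2 = c₁ v := fun v =>
      congrArg Subtype.val (DFunLike.congr_fun hkf v)
    let k : KC r K (n + 1) := ((LinearMap.fst ℤ K P).compAlternatingMap kf).compLinearMap (kproj {a})
    let s : KC r M (n + 1) := c₁ - j.compAlternatingMap k
    let N : Submodule ℤ M := P.map (T (stdE b))
    have hsN : ∀ v, s v ∈ N := fun v => by
      refine ⟨(kf fun i => kproj {a} (v i)).2, (kf fun i => kproj {a} (v i)).2.2, ?_⟩
      have h1 := hkf' fun i => kproj {a} (v i)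
      have h2 := DFunLike.congr_fun (kc_comp_kproj hb₁) v
      rw [AlternatingMap.compLinearMap_apply] at h2
      show _ = c₁ v - j (kf fun i => kproj {a} (v i)).1
      rw [← h2]
      exact (sub_eq_of_eq_add' h1.symm).symm
    have hds : kd T s = 0 := by rw [map_sub, hdc₁, kd_comp_of_trivial hTj, sub_zero]
    have hsoff : KOff {a} s := hb₁.sub fun v i l hl hv => by
      have := kOff_comp_kproj {a} ((LinearMap.fst ℤ K P).compAlternatingMap kf) v i l hl hv
      show j (k v) = 0
      rw [show k v = 0 from this, map_zero]
    have hNP : N ≤ P := by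
      rintro _ ⟨f, hf, rfl⟩
      exact hPT _ _ hf
    have hNT : ∀ v, ∀ m ∈ N, T v m ∈ N := by
      rintro v _ ⟨f, hf, rfl⟩
      exact ⟨T v f, hPT _ _ hf, hT _ _ _⟩
    obtain ⟨b₂, hb₂N, hb₂⟩ := kc_normalize T N {a}
      (by rintro _ rfl m hm; exact hNP hm) b (hNT _)
      (by
        rintro _ ⟨f, hf, rfl⟩
        obtain ⟨k, f₂, hf₂, rfl⟩ := hP f hf
        exact ⟨T (stdE b) f₂, ⟨f₂, hf₂, rfl⟩, by rw [map_add, hTj, zero_add]⟩) s hsN hsoff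
    have hs : s = kd T b₂ := by
      rw [← sub_eq_zero]
      ext v
      have hdz : kd T (s - kd T b₂) = 0 := by rw [map_sub, hds, kd_kd T hT, sub_zero]
      have h1 := kc_ker_of_off T (Set.mem_insert b {a}) hdz hb₂ v
      obtain ⟨f, hf, h2⟩ : (s - kd T b₂) v ∈ N :=
        N.sub_mem (hsN v) (kc_mem_sub T hNT hb₂N v)
      rw [← h2] at h1
      obtain ⟨l, hl⟩ := hC _ (hPT _ _ hf) h1
      rw [← h2, ← hl, hQ f l hf hl.symm, map_zero]
      rfl
    refine ⟨k, b₁ + b₂, ?_⟩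
    rw [map_add, ← hs]
    show _ + (c₁ - _) = _
    rw [hc₁]
    abel

/-- A constant cochain is a coboundary of functions exactly when it is a coboundary of constants for
the multiplication operators `ζ`. In the application `D` is the derivative, `Z k` is the linear
function `z ↦ k z`, and `ζ v` is multiplication by `ι v`. If `j c = dh`, then `D h` is a cocycle, so
it is cohomologous to a constant `k`; integrating, `h` is `Z k` up to a cocycle, and
`d (Z k) = j (ζ ∧ k)`. -/
theorem const_mem_kB_iff (T : (Fin r → ℤ) →ₗ[ℤ] Module.End ℤ M)
    (hT : ∀ v w m, T v (T w m) = T w (T v m)) (j : K →ₗ[ℤ] M) (hj : Function.Injective j)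
    (hTj : ∀ v k, T v (j k) = 0)
    (hdec : ∀ (n : ℕ) (c : KC r M n), kd T c = 0 →
      ∃ k : KC r K n, c - j.compAlternatingMap k ∈ kB T n)
    (D : M →ₗ[ℤ] M) (hD : Function.Surjective D) (hDT : ∀ v m, D (T v m) = T v (D m))
    (hDj : ∀ m, D m = 0 ↔ ∃ k, j k = m)
    (ζ : (Fin r → ℤ) →ₗ[ℤ] Module.End ℤ K) (Z : K →ₗ[ℤ] M) (hDZ : ∀ k, D (Z k) = j k)
    (hZ : ∀ v k, T v (Z k) = j (ζ v k)) {n : ℕ} (c : KC r K n) :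
    j.compAlternatingMap c ∈ kB T n ↔ c ∈ kB ζ n := by
  have hjinj : ∀ {n} {c c' : KC r K n}, j.compAlternatingMap c = j.compAlternatingMap c' → c = c' :=
    fun {n c c'} h => AlternatingMap.ext fun v => hj (DFunLike.congr_fun h v)
  have hdZ : ∀ {n} (k : KC r K n), kd T (Z.compAlternatingMap k) = j.compAlternatingMap (kd ζ k) :=
    fun k => by ext v; simp [kd_apply, hZ]
  cases n with
  | zero =>
    show _ = _ ↔ _ = _
    constructor
    · intro h
      exact hjinj (h.trans (by ext; simp))
    · rintro rfl
      ext; simp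
  | succ n =>
    constructor
    · rintro ⟨h, hh⟩
      obtain ⟨k, hk⟩ := hdec n (D.compAlternatingMap h) (by
        rw [kd_comp D hDT, hh]
        ext v
        exact (hDj _).2 ⟨_, rfl⟩)
      obtain ⟨B, hB, hDB⟩ := kB_lift D hD hDT hk
      obtain ⟨l, hl⟩ := kc_lift_sub j hj (h - Z.compAlternatingMap k - B) fun v => (hDj _).1 (by
        have := DFunLike.congr_fun hDB v
        simp only [LinearMap.compAlternatingMap_apply, AlternatingMap.sub_apply] at this ⊢
        rw [map_sub, map_sub, this, hDZ]
        abel)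
      refine ⟨k, hjinj ?_⟩
      rw [← hdZ, ← hh]
      have := kd_comp_of_trivial hTj l
      rw [hl, map_sub, map_sub, kB_le_kZ T hT hB, sub_zero, sub_eq_zero] at this
      exact this.symm
    · rintro ⟨k, rfl⟩
      exact ⟨_, hdZ k⟩

/-- Cohomology of the units from the exponential sequence `ℤ → M → U`. The hypothesis `hi` says that
degree `i + 1` cohomology of `ℤ` embeds into that of `M`, so every cocycle of `U` in degree `i` lifts
to a cocycle of `M`, and it may be taken constant by `hdec`. The class of a constant cochain in the
cohomology of `U` vanishes exactly when the cochain is integral up to a coboundary. -/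
theorem exists_const_to_kH (T : (Fin r → ℤ) →ₗ[ℤ] Module.End ℤ M)
    (j : K →ₗ[ℤ] M) (hj : Function.Injective j)
    (hTj : ∀ v k, T v (j k) = 0)
    (hdec : ∀ (n : ℕ) (c : KC r M n), kd T c = 0 →
      ∃ k : KC r K n, c - j.compAlternatingMap k ∈ kB T n)
    (ζ : (Fin r → ℤ) →ₗ[ℤ] Module.End ℤ K)
    (hζ : ∀ (n : ℕ) (c : KC r K n), j.compAlternatingMap c ∈ kB T n ↔ c ∈ kB ζ n)
    (TU : (Fin r → ℤ) →ₗ[ℤ] Module.End ℤ U) (E : M →ₗ[ℤ] U) (hE : Function.Surjective E)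
    (hET : ∀ v m, E (T v m) = TU v (E m))
    (e : ℤ →ₗ[ℤ] K) (he : Function.Injective e) (hEe : ∀ m, E m = 0 ↔ ∃ n, j (e n) = m)
    (i : ℕ) (hi : ∀ n : KC r ℤ (i + 1), e.compAlternatingMap n ∈ kB ζ (i + 1) → n = 0) :
    ∃ Φ : KC r K i →+ kH TU i, Function.Surjective Φ ∧
      ∀ c, Φ c = 0 ↔ ∃ n : KC r ℤ i, c - e.compAlternatingMap n ∈ kB ζ i := by
  have hZ : ∀ c : KC r K i, (E.comp j).compAlternatingMap c ∈ kZ TU i := fun c => by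
    refine kd_comp_of_trivial (fun v k => ?_) c
    rw [LinearMap.comp_apply, ← hET, hTj, map_zero]
  let Φ₀ : KC r K i →ₗ[ℤ] kZ TU i := LinearMap.codRestrict _
    ((E.comp j).compAlternatingMapₗ ℤ : KC r K i →ₗ[ℤ] KC r U i) hZ
  have hje : Function.Injective (j.comp e) := hj.comp he
  -- cochains killed by `E` are integral constants
  have hker : ∀ {n} (c : KC r M n), E.compAlternatingMap c = 0 →
      ∃ m : KC r ℤ n, j.compAlternatingMap (e.compAlternatingMap m) = c := fun c hc =>
    kc_lift_sub (j.comp e) hje c fun v => (hEe _).1 (DFunLike.congr_fun hc v)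
  have hEje : ∀ {n} (m : KC r ℤ n),
      E.compAlternatingMap (j.compAlternatingMap (e.compAlternatingMap m)) = 0 := fun m => by
    ext v
    exact (hEe _).2 ⟨_, rfl⟩
  have hEsub : ∀ {n} (c c' : KC r M n), E.compAlternatingMap (c - c') =
      E.compAlternatingMap c - E.compAlternatingMap c' := fun c c' => by ext v; simp
  have hjsub : ∀ {n} (c c' : KC r K n), j.compAlternatingMap (c - c') =
      j.compAlternatingMap c - j.compAlternatingMap c' := fun c c' => by ext v; simp
  refine ⟨((Submodule.mkQ _).comp Φ₀).toAddMonoidHom, ?_, fun c => ?_⟩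
  · intro y
    obtain ⟨⟨u, hu⟩, rfl⟩ := Submodule.mkQ_surjective _ y
    obtain ⟨f, rfl⟩ := kc_lift E hE u
    obtain ⟨m, hm⟩ := hker (kd T f) (by rw [← kd_comp E hET]; exact hu)
    have hm0 : m = 0 := hi m ((hζ _ _).1 (by rw [hm]; exact ⟨f, rfl⟩))
    have hf : kd T f = 0 := by rw [← hm, hm0]; ext; simp
    obtain ⟨k, hk⟩ := hdec i f hf
    refine ⟨k, ?_⟩
    show Submodule.Quotient.mk (Φ₀ k) = Submodule.Quotient.mk _
    rw [eq_comm, Submodule.Quotient.eq]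
    show E.compAlternatingMap f - E.compAlternatingMap (j.compAlternatingMap k) ∈ kB TU i
    rw [← hEsub]
    exact kB_comp E hET hk
  · show Submodule.Quotient.mk (Φ₀ c) = 0 ↔ _
    rw [Submodule.Quotient.mk_eq_zero]
    show E.compAlternatingMap (j.compAlternatingMap c) ∈ kB TU i ↔ _
    constructor
    · intro h
      obtain ⟨B, hB, hEB⟩ := kB_lift E hE hET h
      obtain ⟨m, hm⟩ := hker (j.compAlternatingMap c - B) (by rw [hEsub, hEB, sub_self])
      refine ⟨m, (hζ _ _).1 ?_⟩
      rw [hjsub, hm, sub_sub_cancel]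
      exact hB
    · rintro ⟨m, hm⟩
      have := kB_comp E hET ((hζ _ _).2 hm)
      rwa [hjsub, hEsub, hEje, sub_zero] at this

end ConstantClasses

/-! ### Constant cochains and exterior powers -/

section ExteriorModel

open Set.powersetCard

variable {r : ℕ}

/-- For a symmetric function of `i`-tuples that vanishes on non-injective ones, the sum over tuples
is `i!` times the sum over subsets of cardinality `i`. -/
theorem sum_tuples_eq {W : Type*} [AddCommGroup W] {i : ℕ} (F : (Fin i → Fin r) → W)
    (hperm : ∀ f (σ : Equiv.Perm (Fin i)), F (f ∘ σ) = F f)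
    (hinj : ∀ f, ¬ Function.Injective f → F f = 0) :
    ∑ f, F f = i.factorial • ∑ s : Set.powersetCard (Fin r) i, F (ofFinEmbEquiv.symm s) := by
  have hsum := Finset.sum_of_injOn (s := Finset.univ) (t := Finset.univ)
    (f := fun p : Set.powersetCard (Fin r) i × Equiv.Perm (Fin i) => F (ofFinEmbEquiv.symm p.1))
    (g := F) (fun p => ofFinEmbEquiv.symm p.1 ∘ p.2) ?_ (by simp) ?_ (fun p _ => (hperm _ _).symm)
  · rw [← hsum, Fintype.sum_prod_type]
    simp [Finset.smul_sum, Fintype.card_perm]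
  · rintro ⟨s, σ⟩ - ⟨s', σ'⟩ - h
    have hs : s = s' := by
      apply SetLike.ext
      intro k
      rw [← mem_range_ofFinEmbEquiv_symm_iff_mem, ← mem_range_ofFinEmbEquiv_symm_iff_mem,
        ← σ.surjective.range_comp (ofFinEmbEquiv.symm s),
        ← σ'.surjective.range_comp (ofFinEmbEquiv.symm s')]
      exact iff_of_eq (congrArg (k ∈ Set.range ·) h)
    subst hs
    refine Prod.ext rfl (Equiv.ext fun k => ?_)
    exact (ofFinEmbEquiv.symm s).injective (congrFun h k)
  · intro f _ hf
    refine hinj f fun hfi => hf ?_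
    let s : Set.powersetCard (Fin r) i :=
      ⟨Finset.univ.image f, by
        show Finset.card _ = i
        rw [Finset.card_image_of_injective _ hfi]; simp⟩
    have hs : ∀ k, ∃ l, ofFinEmbEquiv.symm s l = f k := fun k => by
      have : f k ∈ s := by
        show f k ∈ Finset.univ.image f
        simp
      exact (mem_range_ofFinEmbEquiv_symm_iff_mem s _).2 this
    choose σ hσ using hs
    have hσi : Function.Injective σ := fun k l h => hfi (by rw [← hσ, ← hσ, h])
    exact ⟨(s, Equiv.ofBijective σ (Finite.injective_iff_bijective.1 hσi)), by simp,
      funext fun k => hσ k⟩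

/-- The value of a cochain on the increasing tuple of basis vectors indexed by a subset `s` of
cardinality `i`. -/
def kval {K : Type*} [AddCommGroup K] {i : ℕ} (c : KC r K i) (s : Set.powersetCard (Fin r) i) : K :=
  c fun l => stdE (ofFinEmbEquiv.symm s l)

theorem kval_eq {K : Type*} [AddCommGroup K] {i : ℕ} (c : KC r K i)
    (s : Set.powersetCard (Fin r) i) : kval c s =
      exteriorPower.alternatingMapLinearEquiv c ((Pi.basisFun ℤ (Fin r)).exteriorPower i s) := by
  rw [exteriorPower.basis_apply, exteriorPower.ιMulti_family,
    exteriorPower.alternatingMapLinearEquiv_apply_ιMulti, kval]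
  congr 1
  ext l : 1
  simp

theorem kval_injective {K : Type*} [AddCommGroup K] {i : ℕ} {c c' : KC r K i}
    (h : ∀ s, kval c s = kval c' s) : c = c' := by
  apply exteriorPower.alternatingMapLinearEquiv.injective
  refine ((Pi.basisFun ℤ (Fin r)).exteriorPower i).ext fun s => ?_
  rw [← kval_eq, ← kval_eq, h]

theorem kval_surjective {K : Type*} [AddCommGroup K] {i : ℕ}
    (y : Set.powersetCard (Fin r) i → K) : ∃ c : KC r K i, ∀ s, kval c s = y s := by
  refine ⟨exteriorPower.alternatingMapLinearEquiv.symm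
    (((Pi.basisFun ℤ (Fin r)).exteriorPower i).constr ℤ y), fun s => ?_⟩
  rw [kval_eq, LinearEquiv.apply_symm_apply, Module.Basis.constr_basis]

/-- The Koszul operators on `ℂ` given by multiplication by `ι v`. Its differential is the wedge product
with `x = (ι e_1, …, ι e_r)`. -/
def mulData (ι : (Fin r → ℤ) →+ ℂ) : (Fin r → ℤ) →ₗ[ℤ] Module.End ℤ ℂ :=
  AddMonoidHom.toIntLinearMap
    { toFun := fun v => (AddMonoidHom.mulLeft (ι v)).toIntLinearMap
      map_zero' := by ext; simp
      map_add' := fun v w => by ext; simp [add_mul] }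

@[simp] theorem mulData_apply (ι : (Fin r → ℤ) →+ ℂ) (v : Fin r → ℤ) (k : ℂ) :
    mulData ι v k = ι v * k := rfl

/-- The inclusion of `ℤ` into `ℂ`. -/
def intIncl : ℤ →ₗ[ℤ] ℂ := (Int.castAddHom ℂ).toIntLinearMap

@[simp] theorem intIncl_apply (n : ℤ) : intIncl n = n := rfl

theorem injective_of_linearIndependent (ι : (Fin r → ℤ) →+ ℂ)
    (hind : LinearIndependent ℚ fun j : Fin r => ι (Pi.single j 1)) : Function.Injective ι := by
  rw [injective_iff_map_eq_zero]
  intro v hv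
  have hsum : v = ∑ j, v j • stdE j := by
    ext k
    simp [Finset.sum_apply, Pi.single_apply]
  have h := Fintype.linearIndependent_iff.1 hind (fun j => (v j : ℚ)) (by
    rw [hsum, map_sum] at hv
    rw [← hv]
    refine Finset.sum_congr rfl fun j _ => ?_
    rw [map_zsmul]
    simp [Rat.smul_def])
  ext j
  exact_mod_cast h j

/-- In degrees from `1` to `r - 1`, an integral cochain that is a coboundary for `mulData ι` vanishes.
It is a cocycle, and since `ι` is injective the cocycle relation holds already in `ℤ^r`. Evaluated on
`e_j` followed by basis vectors different from `e_j`, its `j`-th coordinate is the value of the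
cochain on those basis vectors. -/
theorem int_eq_zero_of_mem_kB (ι : (Fin r → ℤ) →+ ℂ) (hι : Function.Injective ι) {i : ℕ}
    (hi : i + 2 ≤ r) (n : KC r ℤ (i + 1))
    (hn : intIncl.compAlternatingMap n ∈ kB (mulData ι) (i + 1)) : n = 0 := by
  have hd := kB_le_kZ (mulData ι) (fun v w m => by simp; ring) hn
  have hrel : ∀ v : Fin (i + 2) → (Fin r → ℤ),
      ∑ k : Fin (i + 2), ((-1 : ℤ) ^ (k : ℕ) * n (k.removeNth v)) • v k = 0 := fun v => by
    apply hι
    have := DFunLike.congr_fun hd v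
    rw [kd_apply] at this
    rw [map_zero, map_sum]
    refine Eq.trans (Finset.sum_congr rfl fun k _ => ?_) this
    rw [map_zsmul]
    simp
    ring
  refine kc_ext fun f _ => ?_
  obtain ⟨j, hj⟩ : ∃ j, ∀ k, f k ≠ j := by
    by_contra! hc
    have := Fintype.card_le_of_surjective f hc
    simp at this
    omega
  have := congrFun (hrel (Fin.cons (stdE j) fun k => stdE (f k))) j
  rw [Fin.sum_univ_succ] at this
  have hz : ∀ k, (Pi.single (f k) 1 : Fin r → ℤ) j = 0 := fun k =>
    Pi.single_eq_of_ne (hj k).symm 1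
  simpa [Finset.sum_apply, hz, Fin.removeNth] using this

section Model

variable (ι : (Fin r → ℤ) →+ ℂ) {V : Type*} [AddCommGroup V] [Module ℂ V]

/-- The map sending a complex cochain `c` to `∑ c(e_{s₁}, …, e_{s_i}) e_{s₁} ∧ ⋯ ∧ e_{s_i}` in the
`i`-th exterior power of `V`, the sum being over increasing index tuples. The vectors `e j` in `V`
take the place of the standard basis vectors. -/
noncomputable def wedgeMap (i : ℕ) (e : Fin r → V) : KC r ℂ i →+ ⋀[ℂ]^i V where
  toFun c := ∑ s, kval c s • exteriorPower.ιMulti_family ℂ i e s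
  map_zero' := by simp [kval]
  map_add' c c' := by simp [kval, add_smul, Finset.sum_add_distrib]

theorem wedgeMap_apply (i : ℕ) (e : Fin r → V) (c : KC r ℂ i) :
    wedgeMap i e c = ∑ s, kval c s • exteriorPower.ιMulti_family ℂ i e s := rfl

theorem wedgeMap_surjective (i : ℕ) (e : Fin r → V) (he : Submodule.span ℂ (Set.range e) = ⊤) :
    Function.Surjective (wedgeMap i e) := by
  intro y
  have hy : y ∈ Submodule.span ℂ (Set.range (exteriorPower.ιMulti_family ℂ i e)) := by
    rw [exteriorPower.ιMulti_family_span_of_span ℂ he]; trivial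
  obtain ⟨w, hw⟩ := (Submodule.mem_span_range_iff_exists_fun ℂ).1 hy
  obtain ⟨c, hc⟩ := kval_surjective w
  exact ⟨c, by rw [wedgeMap_apply, ← hw]; simp only [hc]⟩

/-- Up to the factor `i!`, the sum over increasing tuples may be replaced by a sum over all tuples,
which is easier to manipulate. -/
theorem factorial_smul_wedgeMap (i : ℕ) (e : Fin r → V) (c : KC r ℂ i) :
    i.factorial • wedgeMap i e c = ∑ f : Fin i → Fin r,
      c (fun l => stdE (f l)) • exteriorPower.ιMulti ℂ i fun l => e (f l) := by
  rw [sum_tuples_eq]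
  · rfl
  · intro f σ
    have h1 : c (fun l => stdE ((f ∘ σ) l)) = Equiv.Perm.sign σ • c fun l => stdE (f l) :=
      c.map_perm (fun l => stdE (f l)) σ
    have h2 : exteriorPower.ιMulti ℂ i (fun l => e ((f ∘ σ) l)) =
        Equiv.Perm.sign σ • exteriorPower.ιMulti ℂ i fun l => e (f l) :=
      (exteriorPower.ιMulti ℂ i).map_perm (fun l => e (f l)) σ
    rw [h1, h2]
    rcases Int.units_eq_one_or (Equiv.Perm.sign σ) with h | h <;> rw [h] <;> simp
  · intro f hf
    rw [(exteriorPower.ιMulti ℂ i).map_eq_zero_of_not_injective _ (fun h => hf fun k l hkl =>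
      h (by simp only [hkl])), smul_zero]

/-- Coboundaries are multiples of `∑ ι(e_j) e_j`, which is zero by hypothesis. -/
theorem wedgeMap_kd (i : ℕ) (e : Fin r → V) (he : ∑ j, ι (stdE j) • e j = 0) (c : KC r ℂ i) :
    wedgeMap (i + 1) e (kd (mulData ι) c) = 0 := by
  have hf := factorial_smul_wedgeMap (i + 1) e (kd (mulData ι) c)
  have h0 : (∑ f : Fin (i + 1) → Fin r, kd (mulData ι) c (fun l => stdE (f l)) •
      exteriorPower.ιMulti ℂ (i + 1) fun l => e (f l)) = 0 := by
    simp only [kd_apply, Finset.sum_smul]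
    rw [Finset.sum_comm]
    refine Finset.sum_eq_zero fun k _ => ?_
    rw [← (Fin.insertNthEquiv (fun _ => Fin r) k).sum_comp, Fintype.sum_prod_type,
      Finset.sum_comm]
    refine Finset.sum_eq_zero fun g _ => ?_
    have key : ∀ j : Fin r, (exteriorPower.ιMulti ℂ (i + 1) fun l =>
        e ((Fin.insertNthEquiv (fun _ => Fin r) k) (j, g) l)) =
        (exteriorPower.ιMulti ℂ (i + 1)).toMultilinearMap.toLinearMap
          (k.insertNth 0 fun l => e (g l)) k (e j) := fun j => by
      rw [MultilinearMap.toLinearMap_apply]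
      show _ = exteriorPower.ιMulti ℂ (i + 1) _
      congr 1
      rw [Fin.update_insertNth]
      funext l
      refine Fin.succAboveCases k ?_ (fun m => ?_) l <;> simp
    have key2 : ∀ j : Fin r, ((-1 : ℤ) ^ (k : ℕ) • mulData ι
        (stdE ((Fin.insertNthEquiv (fun _ => Fin r) k) (j, g) k))
        (c (k.removeNth fun l => stdE ((Fin.insertNthEquiv (fun _ => Fin r) k) (j, g) l)))) =
        ((-1 : ℤ) ^ (k : ℕ) • c fun l => stdE (g l)) * ι (stdE j) := fun j => by
      have : (k.removeNth fun l => (stdE ((Fin.insertNthEquiv (fun _ => Fin r) k) (j, g) l) :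
          Fin r → ℤ)) = fun l => stdE (g l) := by
        funext l
        simp [Fin.removeNth]
      rw [this, mulData_apply]
      simp
      ring
    simp only [key, key2, mul_smul]
    rw [← Finset.smul_sum]
    simp only [← map_smul]
    rw [← map_sum, he, map_zero, smul_zero]
  rw [h0] at hf
  have : ((i + 1).factorial : ℂ) • wedgeMap (i + 1) e (kd (mulData ι) c) = 0 := by
    rw [Nat.cast_smul_eq_nsmul]; exact hf
  exact (smul_eq_zero.1 this).resolve_left (by exact_mod_cast Nat.factorial_ne_zero _)

/-- Apart from `e a`, the vectors `e k` are linearly independent, as `p` shows, so no cochain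
vanishing in direction `a` is lost. -/
theorem wedgeMap_eq_zero_of_off (i : ℕ) (e : Fin r → V) (a : Fin r) (p : V →ₗ[ℂ] (Fin r → ℂ))
    (hp : ∀ k, k ≠ a → p (e k) = Pi.single k 1) (c : KC r ℂ i) (hc : KOff {a} c)
    (h0 : wedgeMap i e c = 0) : c = 0 := by
  have h1 := congrArg (exteriorPower.map i p) h0
  rw [wedgeMap_apply, map_sum, map_zero] at h1
  simp only [map_smul, exteriorPower.map_apply_ιMulti_family] at h1
  have h2 : ∀ s, kval c s • exteriorPower.ιMulti_family ℂ i (p ∘ e) s =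
      kval c s • (Pi.basisFun ℂ (Fin r)).exteriorPower i s := fun s => by
    by_cases hs : ∃ l, ofFinEmbEquiv.symm s l = a
    · obtain ⟨l, hl⟩ := hs
      rw [kval, hc _ l a rfl (by rw [hl]), zero_smul, zero_smul]
    · push Not at hs
      rw [exteriorPower.basis_apply]
      congr 1
      refine congrArg (exteriorPower.ιMulti ℂ i) (funext fun l => ?_)
      simp [hp _ (hs l)]
  simp only [h2] at h1
  have h3 := Fintype.linearIndependent_iff.1
    ((Pi.basisFun ℂ (Fin r)).exteriorPower i).linearIndependent _ h1
  exact kval_injective fun s => by rw [h3 s]; rfl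

/-- The kernel of `wedgeMap` consists of the coboundaries: since `ι(e_a)` is invertible, a cochain can
be made to vanish in direction `a`, where `wedgeMap` is injective. -/
theorem wedgeMap_eq_zero_iff (i : ℕ) (e : Fin r → V) (he : ∑ j, ι (stdE j) • e j = 0)
    (a : Fin r) (ha : ι (stdE a) ≠ 0) (p : V →ₗ[ℂ] (Fin r → ℂ))
    (hp : ∀ k, k ≠ a → p (e k) = Pi.single k 1) (c : KC r ℂ i) :
    wedgeMap i e c = 0 ↔ c ∈ kB (mulData ι) i := by
  cases i with
  | zero =>
    constructor
    · intro h
      exact wedgeMap_eq_zero_of_off 0 e a p hp c (fun v k => k.elim0) h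
    · intro h
      rw [show c = 0 from h, map_zero]
  | succ i =>
    constructor
    · intro h
      obtain ⟨b, -, hb⟩ := kc_normalize (mulData ι) ⊤ ∅ (by simp) a (by simp)
        (fun m _ => ⟨(ι (stdE a))⁻¹ * m, trivial, mul_inv_cancel_left₀ ha m⟩) c (by simp)
        (fun v k l hl _ => absurd hl (Set.notMem_empty l))
      rw [insert_empty_eq] at hb
      have := wedgeMap_eq_zero_of_off (i + 1) e a p hp _ hb (by
        rw [map_sub, h, wedgeMap_kd ι i e he, sub_zero])
      exact ⟨b, (sub_eq_zero.1 this).symm⟩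
    · rintro ⟨b, rfl⟩
      exact wedgeMap_kd ι i e he b

/-- Under `wedgeMap`, the integer-valued cochains correspond to the subgroup generated by the
wedges of vectors of the lattice `Q (ℤ^r)`. -/
theorem mem_closure_iff_exists_int (i : ℕ) (Q : (Fin r → ℤ) →+ V) (y : ⋀[ℂ]^i V) :
    y ∈ AddSubgroup.closure
        (Set.range fun v : Fin i → (Fin r → ℤ) => exteriorPower.ιMulti ℂ i fun l => Q (v l)) ↔
      ∃ n : KC r ℤ i, wedgeMap i (fun j => Q (stdE j)) (intIncl.compAlternatingMap n) = y := by
  have hkv : ∀ (n : KC r ℤ i) s, kval (intIncl.compAlternatingMap n) s = ((kval n s : ℤ) : ℂ) :=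
    fun n s => rfl
  constructor
  · intro hy
    let ψ : KC r ℤ i →+ ⋀[ℂ]^i V := (wedgeMap i fun j => Q (stdE j)).comp
      (intIncl.compAlternatingMapₗ ℤ : KC r ℤ i →ₗ[ℤ] KC r ℂ i).toAddMonoidHom
    suffices h : AddSubgroup.closure (Set.range fun v : Fin i → (Fin r → ℤ) =>
        exteriorPower.ιMulti ℂ i fun l => Q (v l)) ≤ ψ.range from h hy
    rw [AddSubgroup.closure_le]
    rintro _ ⟨v, rfl⟩
    let θ : KC r (⋀[ℂ]^i V) i :=
      { ((exteriorPower.ιMulti ℂ i).toMultilinearMap.restrictScalars ℤ).compLinearMap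
          (fun _ => Q.toIntLinearMap) with
        map_eq_zero_of_eq' := fun v k l hkl hne =>
          (exteriorPower.ιMulti ℂ i).map_eq_zero_of_eq (fun l => Q (v l)) (by simp only [hkl]) hne }
    let B := (Pi.basisFun ℤ (Fin r)).exteriorPower i
    obtain ⟨n, hn⟩ := kval_surjective fun s => B.repr (exteriorPower.ιMulti ℤ i v) s
    refine ⟨n, ?_⟩
    show wedgeMap i _ (intIncl.compAlternatingMap n) = θ v
    rw [← exteriorPower.alternatingMapLinearEquiv_apply_ιMulti θ,
      ← B.sum_repr (exteriorPower.ιMulti ℤ i v), map_sum, wedgeMap_apply]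
    refine Finset.sum_congr rfl fun s _ => ?_
    rw [map_smul, ← kval_eq, hkv, hn]
    exact Int.cast_smul_eq_zsmul ℂ _ (kval θ s)
  · rintro ⟨n, rfl⟩
    rw [wedgeMap_apply]
    refine AddSubgroup.sum_mem _ fun s _ => ?_
    rw [hkv]
    have hs : exteriorPower.ιMulti_family ℂ i (fun j => Q (stdE j)) s ∈ AddSubgroup.closure
        (Set.range fun v : Fin i → (Fin r → ℤ) => exteriorPower.ιMulti ℂ i fun l => Q (v l)) :=
      AddSubgroup.subset_closure ⟨fun l => stdE (ofFinEmbEquiv.symm s l), rfl⟩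
    have hz := Int.cast_smul_eq_zsmul ℂ (kval n s)
      (exteriorPower.ιMulti_family ℂ i (fun j => Q (stdE j)) s)
    exact hz.symm ▸ AddSubgroup.zsmul_mem _ hs (kval n s)

end Model

end ExteriorModel

/-! ### Entire functions -/

/-- The additive group of entire functions. -/
def EntireFun : Type := {f : ℂ → ℂ // Differentiable ℂ f}

namespace EntireFun

/-- Evaluation as a coercion to functions. -/
instance : CoeFun EntireFun fun _ => ℂ → ℂ := ⟨Subtype.val⟩

noncomputable instance : AddCommGroup EntireFun :=
  inferInstanceAs (AddCommGroup ((
    { carrier := {f : ℂ → ℂ | Differentiable ℂ f}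
      zero_mem' := differentiable_const 0
      add_mem' := fun hf hg => hf.add hg
      neg_mem' := fun hf => hf.neg } : AddSubgroup (ℂ → ℂ)) : Type))

theorem ext' {f g : EntireFun} (h : ∀ z, f z = g z) : f = g := Subtype.ext (funext h)

/-- Translation by `c`. -/
noncomputable def translate (c : ℂ) : EntireFun →+ EntireFun where
  toFun f := ⟨fun z => f (z + c), f.2.comp (differentiable_id.add_const c)⟩
  map_zero' := rfl
  map_add' _ _ := rfl

/-- The action of `ℤ^r` on entire functions by `(n · f)(z) = f (z + ι n)`. -/
noncomputable def rep (r : ℕ) (ι : (Fin r → ℤ) →+ ℂ) :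
    Representation ℤ (Multiplicative (Fin r → ℤ)) EntireFun where
  toFun n := (translate (ι n.toAdd)).toIntLinearMap
  map_one' := LinearMap.ext fun f => ext' fun z => by
    show f (z + ι (Multiplicative.toAdd 1)) = f z
    simp
  map_mul' m n := LinearMap.ext fun f => ext' fun z => by
    show f (z + ι (m * n).toAdd) = f (z + ι m.toAdd + ι n.toAdd)
    rw [toAdd_mul, map_add, add_assoc]

/-- Constant functions. -/
noncomputable def const : ℂ →ₗ[ℤ] EntireFun := AddMonoidHom.toIntLinearMap
  { toFun := fun k => ⟨fun _ => k, differentiable_const k⟩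
    map_zero' := rfl
    map_add' := fun _ _ => rfl }

/-- The linear functions `z ↦ k z`. -/
noncomputable def linear : ℂ →ₗ[ℤ] EntireFun := AddMonoidHom.toIntLinearMap
  { toFun := fun k => ⟨fun z => k * z, differentiable_id.const_mul k⟩
    map_zero' := ext' fun z => zero_mul z
    map_add' := fun k l => ext' fun z => add_mul k l z }

/-- The complex derivative. -/
noncomputable def derivMap : EntireFun →ₗ[ℤ] EntireFun := AddMonoidHom.toIntLinearMap
  { toFun := fun f => ⟨deriv f, f.2.deriv⟩
    map_zero' := ext' fun z => deriv_const z (0 : ℂ)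
    map_add' := fun f g => ext' fun z => deriv_add (f.2 z) (g.2 z) }

/-- The exponential map `f ↦ exp (2πi f)` onto the nowhere-vanishing functions. -/
noncomputable def expMap : EntireFun →ₗ[ℤ] Additive EntireUnits := AddMonoidHom.toIntLinearMap
  { toFun := fun f => Additive.ofMul
      ⟨fun z => exp (2 * Real.pi * I * f z), (f.2.const_mul _).cexp, fun _ => exp_ne_zero _⟩
    map_zero' := Subtype.ext (funext fun z => by
      show exp (2 * Real.pi * I * 0) = 1
      simp)
    map_add' := fun f g => Subtype.ext (funext fun z => by
      show exp (2 * Real.pi * I * (f z + g z)) =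
        exp (2 * Real.pi * I * f z) * exp (2 * Real.pi * I * g z)
      rw [mul_add, exp_add]) }

theorem const_injective : Function.Injective const := fun _ _ h =>
  congrFun (congrArg Subtype.val h) 0

theorem derivMap_surjective : Function.Surjective derivMap := fun g => by
  obtain ⟨f, hf, h⟩ := exists_entire_primitive g.2
  exact ⟨⟨f, hf⟩, Subtype.ext h⟩

theorem derivMap_eq_zero_iff (f : EntireFun) : derivMap f = 0 ↔ ∃ k, const k = f := by
  constructor
  · intro h
    refine ⟨f 0, ext' fun z => ?_⟩
    exact is_const_of_deriv_eq_zero f.2 (fun w => congrFun (congrArg Subtype.val h) w) 0 z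
  · rintro ⟨k, rfl⟩
    exact ext' fun z => deriv_const z k

theorem derivMap_linear (k : ℂ) : derivMap (linear k) = const k := ext' fun z => by
  show deriv (fun z => k * z) z = k
  simp

theorem expMap_surjective : Function.Surjective expMap := fun u => by
  obtain ⟨f, hf, h⟩ := exists_entire_log u.toMul.2.1 u.toMul.2.2
  exact ⟨⟨f, hf⟩, Subtype.ext (funext h)⟩

theorem expMap_eq_zero_iff (f : EntireFun) : expMap f = 0 ↔ ∃ n, const (intIncl n) = f := by
  constructor
  · intro h
    obtain ⟨n, hn⟩ := exists_int_of_exp_eq_one f.2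
      (fun z => congrFun (congrArg (fun u : Additive EntireUnits => u.toMul.1) h) z)
    exact ⟨n, ext' fun z => (hn z).symm⟩
  · rintro ⟨n, rfl⟩
    refine Subtype.ext (funext fun z => ?_)
    show exp (2 * Real.pi * I * (n : ℂ)) = 1
    rw [exp_eq_one_iff]
    exact ⟨n, by ring⟩

section Koszul

variable {r : ℕ} (ι : (Fin r → ℤ) →+ ℂ)

theorem kτ_apply (j : Fin r) (f : EntireFun) (z : ℂ) :
    kτ (rep r ι) (stdE j) f z = f (z + ι (stdE j)) - f z := by
  rw [kτ_stdE]
  rfl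

theorem kτ_eq_zero_iff (j : Fin r) (f : EntireFun) :
    kτ (rep r ι) (stdE j) f = 0 ↔ ∀ z, f (z + ι (stdE j)) = f z := by
  constructor
  · intro h z
    have := kτ_apply ι j f z
    rw [h] at this
    exact sub_eq_zero.1 this.symm
  · intro h
    exact ext' fun z => by rw [kτ_apply, h, sub_self]; rfl

theorem kτ_const (v : Fin r → ℤ) (k : ℂ) : kτ (rep r ι) v (const k) = 0 :=
  (kτ_invariant (rep r ι) (const k)).1 (fun _ => rfl) v

theorem derivMap_kτ (v : Fin r → ℤ) (f : EntireFun) :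
    derivMap (kτ (rep r ι) v f) = kτ (rep r ι) v (derivMap f) :=
  kτ_intertwine (rep r ι) (rep r ι) derivMap (fun g f => ext' fun z => deriv_comp_add_const f (ι g.toAdd) z) v f

theorem expMap_kτ (v : Fin r → ℤ) (f : EntireFun) :
    expMap (kτ (rep r ι) v f) = kτ (entireRep r ι) v (expMap f) :=
  kτ_intertwine _ _ expMap (fun _ _ => rfl) v f

theorem kτ_linear (v : Fin r → ℤ) (k : ℂ) :
    kτ (rep r ι) v (linear k) = const (mulData ι v k) :=
  LinearMap.congr_fun (kdata_ext (LinearMap.applyₗ (linear k) ∘ₗ kτ (rep r ι))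
    (const ∘ₗ LinearMap.applyₗ k ∘ₗ mulData ι) (fun j => ext' fun z => by
      show kτ (rep r ι) (stdE j) (linear k) z = ι (stdE j) * k
      rw [kτ_apply]
      show k * (z + _) - k * z = _
      ring)) v

end Koszul

end EntireFun

/-- Koszul cohomology of the nowhere-vanishing entire functions is the group of constant complex
cochains modulo integral ones and coboundaries. -/
theorem exists_const_to_entire {r : ℕ} (ι : (Fin r → ℤ) →+ ℂ)
    (hind : LinearIndependent ℚ fun j : Fin r => ι (Pi.single j 1))
    (a b : Fin r) (ha : ι (stdE a) ≠ 0) (hab : (ι (stdE b) / ι (stdE a)).im ≠ 0)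
    (i : ℕ) (hi : i + 2 ≤ r) :
    ∃ Φ : KC r ℂ i →+ kH (kτ (entireRep r ι)) i, Function.Surjective Φ ∧
      ∀ c, Φ c = 0 ↔ ∃ n : KC r ℤ i, c - intIncl.compAlternatingMap n ∈ kB (mulData ι) i := by
  have hdec := cocycle_eq_const_add (kτ (EntireFun.rep r ι)) (kτ_comm _) EntireFun.const
    EntireFun.const_injective (EntireFun.kτ_const ι) a b
    (fun g => by
      obtain ⟨f, hf, h⟩ := guichard_step ha g.2
      exact ⟨(⟨f, hf⟩ : EntireFun), EntireFun.ext' fun z =>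
        (EntireFun.kτ_apply ι a _ z).trans (h z)⟩)
    (fun g hg => by
      obtain ⟨k, f, hf, h1, h2⟩ := periodic_difference_step ha hab g.2
        ((EntireFun.kτ_eq_zero_iff ι a g).1 hg)
      refine ⟨k, (⟨f, hf⟩ : EntireFun), (EntireFun.kτ_eq_zero_iff ι a _).2 h1,
        EntireFun.ext' fun z => ?_⟩
      exact (h2 z).trans (congrArg (k + ·) (EntireFun.kτ_apply ι b ⟨f, hf⟩ z).symm))
    (fun f h1 h2 => ⟨f 0, EntireFun.ext' fun z => (doubly_periodic_const ha hab f.2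
      ((EntireFun.kτ_eq_zero_iff ι a _).1 h1) ((EntireFun.kτ_eq_zero_iff ι b _).1 h2) z).symm⟩)
    (fun f k h1 h2 => quasi_period_eq_zero ha hab f.2 ((EntireFun.kτ_eq_zero_iff ι a _).1 h1)
      (fun z => by rw [← EntireFun.kτ_apply, h2]; rfl))
  have hζ : ∀ (n : ℕ) (c : KC r ℂ n), EntireFun.const.compAlternatingMap c ∈
      kB (kτ (EntireFun.rep r ι)) n ↔ c ∈ kB (mulData ι) n := fun n c =>
    const_mem_kB_iff _ (kτ_comm _) EntireFun.const EntireFun.const_injective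
      (EntireFun.kτ_const ι) hdec EntireFun.derivMap EntireFun.derivMap_surjective
      (EntireFun.derivMap_kτ ι) EntireFun.derivMap_eq_zero_iff (mulData ι) EntireFun.linear
      EntireFun.derivMap_linear (EntireFun.kτ_linear ι) c
  exact exists_const_to_kH _ EntireFun.const EntireFun.const_injective (EntireFun.kτ_const ι) hdec
    (mulData ι) hζ _ EntireFun.expMap EntireFun.expMap_surjective (EntireFun.expMap_kτ ι)
    intIncl (fun m n h => by simpa using h) EntireFun.expMap_eq_zero_iff i
    (int_eq_zero_of_mem_kB ι (injective_of_linearIndependent ι hind) hi)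

/-- For `0 ≤ i ≤ r − 2`, `H^i(ℤ^r, O(ℂ)^×) ≅ (∧^i_ℂ V)/L_i` as abelian groups, where
`V = ℂ^r/ℂ·x` with `x = (ι(e_1),…,ι(e_r))`, and `L_i` is the subgroup of the `i`-th
exterior power `∧^i_ℂ V` generated by the wedges `q(v₁) ∧ ⋯ ∧ q(v_i)` of images of integer
vectors under the composite `q` of the inclusion `ℤ^r ⊆ ℂ^r` with the quotient map
`ℂ^r → V`. -/
theorem entireCohomology_low_degree (r : ℕ) (hr : 1 ≤ r) (ι : (Fin r → ℤ) →+ ℂ)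
    (hind : LinearIndependent ℚ fun j : Fin r => ι (Pi.single j 1))
    (hspan : Submodule.span ℝ (Set.range fun j : Fin r => ι (Pi.single j 1)) = ⊤)
    (i : ℕ) (hi : (i : ℤ) ≤ (r : ℤ) - 2)
    (x : Fin r → ℂ) (hx : x = fun j => ι (Pi.single j 1))
    (q : (Fin r → ℂ) →ₗ[ℂ] (Fin r → ℂ) ⧸ Submodule.span ℂ {x})
    (hq : q = (Submodule.span ℂ {x}).mkQ)
    (L : AddSubgroup (⋀[ℂ]^i ((Fin r → ℂ) ⧸ Submodule.span ℂ {x})))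
    (hL : L = AddSubgroup.closure
      {y : ↥(⋀[ℂ]^i ((Fin r → ℂ) ⧸ Submodule.span ℂ {x})) | ∃ v : Fin i → (Fin r → ℤ),
        (y : ExteriorAlgebra ℂ ((Fin r → ℂ) ⧸ Submodule.span ℂ {x})) =
          ExteriorAlgebra.ιMulti ℂ i fun j => q fun k => ((v j k : ℂ))}) :
    Nonempty ((entireCohomology r ι i) ≃+
      (⋀[ℂ]^i ((Fin r → ℂ) ⧸ Submodule.span ℂ {x})) ⧸ L) := by
  obtain ⟨a, b, ha, hab⟩ := exists_im_div_ne_zero hspan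
  obtain ⟨Φ, hΦ, hΦ0⟩ := exists_const_to_entire ι hind a b ha hab i (by omega)
  -- `Q` is `q` restricted to integer vectors
  let Q : (Fin r → ℤ) →+ (Fin r → ℂ) ⧸ Submodule.span ℂ {x} :=
    q.toAddMonoidHom.comp
      { toFun := fun v k => (v k : ℂ)
        map_zero' := by ext; simp
        map_add' := fun v w => by ext; simp }
  have hQ : ∀ j, Q (stdE j) = q (Pi.single j 1) := fun j => by
    show q (fun k => ((stdE j k : ℤ) : ℂ)) = _
    congr 1
    ext k
    by_cases h : k = j
    · subst h; simp
    · simp [Pi.single_eq_of_ne h]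
  have hsum : ∀ v : Fin r → ℂ, q v = ∑ j, v j • Q (stdE j) := fun v => by
    simp only [hQ, ← map_smul]
    rw [← map_sum]
    congr 1
    ext k
    simp [Finset.sum_apply, Pi.single_apply]
  have hqx : q x = 0 := by
    rw [hq, Submodule.mkQ_apply, Submodule.Quotient.mk_eq_zero]
    exact Submodule.mem_span_singleton_self x
  have he : ∑ j, ι (stdE j) • Q (stdE j) = 0 := by
    have hxj : ∀ j, ι (stdE j) = x j := fun j => (congrFun hx j).symm
    simp only [hxj]
    rw [← hsum, hqx]
  have htop : Submodule.span ℂ (Set.range fun j => Q (stdE j)) = ⊤ := by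
    rw [eq_top_iff]
    rintro y -
    obtain ⟨v, rfl⟩ : ∃ v, q v = y := by rw [hq]; exact Submodule.mkQ_surjective _ y
    rw [hsum]
    exact Submodule.sum_mem _ fun j _ => Submodule.smul_mem _ _ (Submodule.subset_span ⟨j, rfl⟩)
  have hxa : x a ≠ 0 := by rw [hx]; exact ha
  -- `v ↦ v - (v_a / x_a) x` kills `x` and fixes `e_k` for `k ≠ a`
  let p : ((Fin r → ℂ) ⧸ Submodule.span ℂ {x}) →ₗ[ℂ] (Fin r → ℂ) :=
    (Submodule.span ℂ {x}).liftQ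
      (LinearMap.id - ((x a)⁻¹ • LinearMap.proj a : (Fin r → ℂ) →ₗ[ℂ] ℂ).smulRight x) (by
        rw [Submodule.span_singleton_le_iff_mem, LinearMap.mem_ker]
        simp [hxa])
  have hp : ∀ k, k ≠ a → p (Q (stdE k)) = Pi.single k 1 := fun k hk => by
    rw [hQ, hq]
    simp [p, Pi.single_eq_of_ne hk.symm]
  have hmem : ∀ y, y ∈ L ↔ ∃ n : KC r ℤ i,
      wedgeMap i (fun j => Q (stdE j)) (intIncl.compAlternatingMap n) = y := fun y => by
    rw [← mem_closure_iff_exists_int, hL]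
    refine iff_of_eq (congrArg (fun S => y ∈ AddSubgroup.closure S) (Set.ext fun w => ?_))
    refine exists_congr fun v => ?_
    rw [eq_comm, Subtype.ext_iff]
    rfl
  obtain ⟨E₁⟩ := gc_koszul i (entireRep r ι)
  obtain ⟨E₂⟩ := addEquiv_of_surjective Φ
    ((QuotientAddGroup.mk' L).comp (wedgeMap i fun j => Q (stdE j))) hΦ
    ((QuotientAddGroup.mk'_surjective L).comp (wedgeMap_surjective i _ htop)) fun c => by
      rw [hΦ0, AddMonoidHom.comp_apply, QuotientAddGroup.mk'_apply,
        QuotientAddGroup.eq_zero_iff, hmem]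
      refine exists_congr fun n => ?_
      rw [← wedgeMap_eq_zero_iff ι i _ he a ha p hp, map_sub, sub_eq_zero, eq_comm]
  exact ⟨E₁.trans E₂⟩
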